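/- arXiv:1003.2135 — 2 statements merged into one kernel-verified Lean document; each statement's English description precedes it below -/
import Mathlib

section
/- Let H be a linear algebraic group over an algebraically closed field, equipped with an action of a torus A, forming the semidirect product A ⋉ H. Let T be a torus in H such that (i) A centralizes T, so that A × T is a subgroup of A ⋉ H, and (ii) the identity component of the fixed-point group H^{A×T} of the conjugation action of A × T on H equals T. Then T is a maximal torus of H. -/
open Matrix

variable (k : Type*) [Field k] [IsAlgClosed k] (N : ℕ)

/-- The regular functions on `GL_N`: the coordinates of a matrix together with
those of its inverse. -/
noncomputable def glCoords (g : GL (Fin N) k) :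
    ((Fin N × Fin N) ⊕ (Fin N × Fin N)) → k :=
  Sum.elim (fun p => (g : Matrix (Fin N) (Fin N) k) p.1 p.2)
    (fun p => ((g⁻¹ : GL (Fin N) k) : Matrix (Fin N) (Fin N) k) p.1 p.2)

/-- Zariski-closed subsets of `GL_N(k)`: common zero loci of polynomials in the
matrix entries and the entries of the inverse.  A linear algebraic group over
the algebraically closed field `k` is a Zariski-closed subgroup of some
`GL_N(k)`. -/
def ZClosed (S : Set (GL (Fin N) k)) : Prop :=
  ∃ I : Set (MvPolynomial ((Fin N × Fin N) ⊕ (Fin N × Fin N)) k),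
    S = {g | ∀ f ∈ I, MvPolynomial.eval (glCoords k N g) f = 0}

/-- The Zariski topology on `GL_N(k)`. -/
noncomputable def zTop : TopologicalSpace (GL (Fin N) k) :=
  TopologicalSpace.generateFrom {U | ZClosed k N Uᶜ}

/-- A diagonal element of `GL_N(k)`. -/
def IsDiag (g : GL (Fin N) k) : Prop :=
  ∀ i j : Fin N, i ≠ j → (g : Matrix (Fin N) (Fin N) k) i j = 0

/-- A torus in `GL_N(k)`: a Zariski-closed connected subgroup that is
diagonalizable, i.e. conjugate to a subgroup of the diagonal matrices. -/
def IsTorus (T : Subgroup (GL (Fin N) k)) : Prop :=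
  ZClosed k N (T : Set (GL (Fin N) k)) ∧
  @IsPreconnected _ (zTop k N) (T : Set (GL (Fin N) k)) ∧
  ∃ c : GL (Fin N) k, ∀ t ∈ T, IsDiag k N (c * t * c⁻¹)

section helpers

set_option linter.unusedSectionVars false
set_option linter.deprecated false
set_option linter.unusedSimpArgs false
open scoped Topology

attribute [local instance] zTop

open MvPolynomial in
/-- pointwise map to the prime spectrum -/
noncomputable def ptMap (g : GL (Fin N) k) :
    PrimeSpectrum (MvPolynomial ((Fin N × Fin N) ⊕ (Fin N × Fin N)) k) :=
  pointToPoint (glCoords k N g)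

variable {k N}

lemma mem_ptMap (g : GL (Fin N) k) (f) :
    f ∈ (ptMap k N g).asIdeal ↔ MvPolynomial.eval (glCoords k N g) f = 0 := by
  show f ∈ MvPolynomial.vanishingIdeal k {glCoords k N g} ↔ _
  rw [MvPolynomial.mem_vanishingIdeal_singleton_iff]
  rfl

lemma zClosed_iff_induced (S : Set (GL (Fin N) k)) :
    ZClosed k N S ↔ IsClosed[TopologicalSpace.induced (ptMap k N) inferInstance] S := by
  rw [isClosed_induced_iff]
  constructor
  · rintro ⟨I, rfl⟩
    refine ⟨PrimeSpectrum.zeroLocus I, PrimeSpectrum.isClosed_zeroLocus I, ?_⟩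
    ext g
    simp only [Set.mem_preimage, PrimeSpectrum.mem_zeroLocus, Set.mem_setOf_eq]
    exact ⟨fun h f hf => (mem_ptMap g f).1 (h hf), fun h f hf => (mem_ptMap g f).2 (h f hf)⟩
  · rintro ⟨t, ht, rfl⟩
    obtain ⟨I, rfl⟩ := (PrimeSpectrum.isClosed_iff_zeroLocus t).1 ht
    refine ⟨I, ?_⟩
    ext g
    simp only [Set.mem_preimage, PrimeSpectrum.mem_zeroLocus, Set.mem_setOf_eq]
    exact ⟨fun h f hf => (mem_ptMap g f).1 (h hf), fun h f hf => (mem_ptMap g f).2 (h f hf)⟩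

lemma zTop_eq : zTop k N = TopologicalSpace.induced (ptMap k N) inferInstance := by
  unfold zTop
  have : {U : Set (GL (Fin N) k) | ZClosed k N Uᶜ} =
      {U | IsOpen[TopologicalSpace.induced (ptMap k N) inferInstance] U} := by
    ext U
    simp only [Set.mem_setOf_eq]
    rw [zClosed_iff_induced]
    exact @isClosed_compl_iff _ (TopologicalSpace.induced (ptMap k N) inferInstance) U
  rw [this]
  exact @TopologicalSpace.generateFrom_setOf_isOpen _
    (TopologicalSpace.induced (ptMap k N) inferInstance)

lemma zClosed_iff (S : Set (GL (Fin N) k)) : ZClosed k N S ↔ IsClosed S := by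
  rw [zClosed_iff_induced, ← zTop_eq]

lemma ptMap_inducing : Topology.IsInducing (ptMap k N) := ⟨zTop_eq⟩

instance zTop_noeth : TopologicalSpace.NoetherianSpace (GL (Fin N) k) :=
  ptMap_inducing.noetherianSpace

/-- regular functions -/
def Reg (r : GL (Fin N) k → k) : Prop :=
  ∃ p : MvPolynomial ((Fin N × Fin N) ⊕ (Fin N × Fin N)) k,
    ∀ g, r g = MvPolynomial.eval (glCoords k N g) p

lemma Reg.const (c : k) : Reg (N := N) (fun _ => c) := ⟨MvPolynomial.C c, by simp⟩
lemma Reg.add {r s : GL (Fin N) k → k} (hr : Reg r) (hs : Reg s) : Reg (fun g => r g + s g) := by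
  obtain ⟨p, hp⟩ := hr; obtain ⟨q, hq⟩ := hs
  exact ⟨p + q, by simp [hp, hq]⟩
lemma Reg.sub {r s : GL (Fin N) k → k} (hr : Reg r) (hs : Reg s) : Reg (fun g => r g - s g) := by
  obtain ⟨p, hp⟩ := hr; obtain ⟨q, hq⟩ := hs
  exact ⟨p - q, by simp [hp, hq]⟩
lemma Reg.mul {r s : GL (Fin N) k → k} (hr : Reg r) (hs : Reg s) : Reg (fun g => r g * s g) := by
  obtain ⟨p, hp⟩ := hr; obtain ⟨q, hq⟩ := hs
  exact ⟨p * q, by simp [hp, hq]⟩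
lemma Reg.sum {ι : Type*} (t : Finset ι) {r : ι → GL (Fin N) k → k} (hr : ∀ i, Reg (r i)) :
    Reg (fun g => ∑ i ∈ t, r i g) := by
  choose p hp using hr
  exact ⟨∑ i ∈ t, p i, by simp [hp]⟩
lemma Reg.prod {ι : Type*} (t : Finset ι) {r : ι → GL (Fin N) k → k} (hr : ∀ i, Reg (r i)) :
    Reg (fun g => ∏ i ∈ t, r i g) := by
  choose p hp using hr
  exact ⟨∏ i ∈ t, p i, by simp [hp, MvPolynomial.eval_prod]⟩
lemma Reg.entry (i j : Fin N) : Reg (fun g : GL (Fin N) k => (g : Matrix (Fin N) (Fin N) k) i j) :=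
  ⟨MvPolynomial.X (Sum.inl (i, j)), by simp [glCoords]⟩
lemma Reg.inv_entry (i j : Fin N) :
    Reg (fun g : GL (Fin N) k => ((g⁻¹ : GL (Fin N) k) : Matrix (Fin N) (Fin N) k) i j) :=
  ⟨MvPolynomial.X (Sum.inr (i, j)), by simp [glCoords]⟩

lemma Reg.isClosed {r : GL (Fin N) k → k} (hr : Reg r) : IsClosed {g | r g = 0} := by
  obtain ⟨p, hp⟩ := hr
  rw [← zClosed_iff]
  exact ⟨{p}, by ext g; simp [hp]⟩

lemma eval_bind {σ τ : Type*} (F : σ → MvPolynomial τ k) (d : τ → k) (f : MvPolynomial σ k) :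
    MvPolynomial.eval d (MvPolynomial.bind₁ F f) =
      MvPolynomial.eval (fun q => MvPolynomial.eval d (F q)) f := by
  show MvPolynomial.eval₂Hom (RingHom.id k) d (MvPolynomial.bind₁ F f) = _
  rw [MvPolynomial.eval₂Hom_bind₁]
  rfl

lemma continuous_of_reg {φ : GL (Fin N) k → GL (Fin N) k}
    (h : ∀ q, Reg (fun g => glCoords k N (φ g) q)) : Continuous φ := by
  refine continuous_iff_isClosed.2 fun S hS => ?_
  rw [← zClosed_iff] at hS ⊢
  obtain ⟨I, rfl⟩ := hS
  choose P hP using h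
  refine ⟨(MvPolynomial.bind₁ P) '' I, ?_⟩
  ext g
  have : glCoords k N (φ g) = fun q => MvPolynomial.eval (glCoords k N g) (P q) := by
    funext q; exact hP q g
  simp only [Set.preimage_setOf_eq, Set.mem_setOf_eq, Set.forall_mem_image]
  refine forall₂_congr fun f hf => ?_
  rw [this, eval_bind]

lemma Reg.linear (c d : GL (Fin N) k) (i j : Fin N) :
    Reg (fun g : GL (Fin N) k => ((c * g * d : GL (Fin N) k) : Matrix (Fin N) (Fin N) k) i j) := by
  simp only [Units.val_mul, Matrix.mul_apply]
  exact Reg.sum _ fun l => Reg.mul (Reg.sum _ fun l' => Reg.mul (Reg.const _) (Reg.entry _ _))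
    (Reg.const _)

lemma Reg.linear_inv (c d : GL (Fin N) k) (i j : Fin N) :
    Reg (fun g : GL (Fin N) k =>
      ((c * g⁻¹ * d : GL (Fin N) k) : Matrix (Fin N) (Fin N) k) i j) := by
  simp only [Units.val_mul, Matrix.mul_apply]
  exact Reg.sum _ fun l => Reg.mul (Reg.sum _ fun l' => Reg.mul (Reg.const _) (Reg.inv_entry _ _))
    (Reg.const _)

lemma continuous_mul_mul (c d : GL (Fin N) k) : Continuous (fun g : GL (Fin N) k => c * g * d) := by
  refine continuous_of_reg ?_
  rintro (⟨i, j⟩ | ⟨i, j⟩)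
  · exact Reg.linear c d i j
  · have := Reg.linear_inv d⁻¹ c⁻¹ i j
    simpa [glCoords, _root_.mul_inv_rev, mul_assoc] using this

lemma isClosed_comm (t : GL (Fin N) k) : IsClosed {g : GL (Fin N) k | g * t = t * g} := by
  have : {g : GL (Fin N) k | g * t = t * g} = ⋂ (i : Fin N) (j : Fin N),
      {g : GL (Fin N) k | ((1 * g * t : GL (Fin N) k) : Matrix (Fin N) (Fin N) k) i j -
        ((t * g * 1 : GL (Fin N) k) : Matrix (Fin N) (Fin N) k) i j = 0} := by
    ext g
    simp only [Set.mem_setOf_eq, Set.mem_iInter, one_mul, mul_one, sub_eq_zero]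
    constructor
    · intro h i j; rw [h]
    · intro h; exact Units.ext (Matrix.ext h)
  rw [this]
  exact isClosed_iInter fun i => isClosed_iInter fun j =>
    ((Reg.linear 1 t i j).sub (Reg.linear t 1 i j)).isClosed

/-- A nonempty finite union of locally closed sets contains a nonempty open part of its closure. -/
lemma exists_open_of_union {X ι : Type*} [TopologicalSpace X] [DecidableEq ι] (Z U : ι → Set X)
    (hZ : ∀ i, IsClosed (Z i)) (hU : ∀ i, IsOpen (U i)) (s : Finset ι) :
    (⋃ i ∈ s, Z i ∩ U i).Nonempty → ∃ V : Set X, IsOpen V ∧ (V ∩ ⋃ i ∈ s, Z i ∩ U i).Nonempty ∧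
      V ∩ closure (⋃ i ∈ s, Z i ∩ U i) ⊆ ⋃ i ∈ s, Z i ∩ U i := by
  induction s using Finset.induction_on with
  | empty => simp
  | insert i s hi ih =>
    simp only [Finset.set_biUnion_insert]
    set O := ⋃ i ∈ s, Z i ∩ U i
    intro hne
    by_cases hc : Z i ∩ U i ⊆ closure O
    · have hO : O.Nonempty := by
        by_contra hO
        rw [Set.not_nonempty_iff_eq_empty] at hO
        rw [hO] at hc hne
        simp only [closure_empty, Set.subset_empty_iff] at hc
        simp [hc] at hne
      obtain ⟨V, hV, hVne, hVs⟩ := ih hO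
      refine ⟨V, hV, hVne.mono (by gcongr; exact Set.subset_union_right), ?_⟩
      rw [closure_union]
      have : closure (Z i ∩ U i) ⊆ closure O := closure_minimal hc isClosed_closure
      rw [Set.union_eq_right.2 this]
      exact hVs.trans Set.subset_union_right
    · obtain ⟨x, hx, hxc⟩ := Set.not_subset.1 hc
      refine ⟨U i \ closure O, (hU i).sdiff isClosed_closure, ⟨x, ⟨hx.2, hxc⟩, Or.inl hx⟩, ?_⟩
      rintro y ⟨⟨hyU, hyO⟩, hy⟩
      rw [closure_union] at hy
      rcases hy with hy | hy
      · have : closure (Z i ∩ U i) ⊆ Z i := closure_minimal Set.inter_subset_left (hZ i)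
        exact Or.inl ⟨this hy, hyU⟩
      · exact absurd hy hyO

/-- Chevalley for our situation. -/
lemma chevalley {τ : Type*} [Finite τ] (I : Ideal (MvPolynomial τ k))
    (F : ((Fin N × Fin N) ⊕ (Fin N × Fin N)) → MvPolynomial τ k) (O : Set (GL (Fin N) k))
    (hO : ∀ g, g ∈ O ↔ ∃ d : τ → k, (∀ f ∈ I, MvPolynomial.eval d f = 0) ∧
      ∀ q, glCoords k N g q = MvPolynomial.eval d (F q)) (hne : O.Nonempty) :
    ∃ V : Set (GL (Fin N) k), IsOpen V ∧ (V ∩ O).Nonempty ∧ V ∩ closure O ⊆ O := by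
  classical
  let φ : MvPolynomial ((Fin N × Fin N) ⊕ (Fin N × Fin N)) k →+* (MvPolynomial τ k ⧸ I) :=
    (Ideal.Quotient.mk I).comp (MvPolynomial.bind₁ F).toRingHom
  have hφ : φ.FinitePresentation := by
    apply RingHom.FinitePresentation.of_finiteType.1
    apply RingHom.FiniteType.of_comp_finiteType (f := MvPolynomial.C)
    have : φ.comp MvPolynomial.C = algebraMap k (MvPolynomial τ k ⧸ I) := by
      ext x
      simp only [φ, RingHom.comp_apply, AlgHom.toRingHom_eq_coe, RingHom.coe_coe]
      rw [MvPolynomial.bind₁_C_right]; rfl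
    rw [this]
    exact RingHom.finiteType_algebraMap.2 inferInstance
  have hcons := PrimeSpectrum.isConstructible_range_comap hφ
  obtain ⟨S, hS⟩ := PrimeSpectrum.exists_constructibleSetData_iff.2 hcons
  have hOp : O = ptMap k N ⁻¹' (Set.range (PrimeSpectrum.comap φ)) := by
    ext g
    rw [hO]
    constructor
    · rintro ⟨d, hd, hg⟩
      let ψ : (MvPolynomial τ k ⧸ I) →+* k := Ideal.Quotient.lift I (MvPolynomial.eval d) hd
      refine ⟨PrimeSpectrum.comap ψ ⊥, ?_⟩
      ext f
      rw [mem_ptMap]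
      have : glCoords k N g = fun q => MvPolynomial.eval d (F q) := funext hg
      rw [this]
      simp only [PrimeSpectrum.comap_asIdeal, Ideal.mem_comap]
      have e : ψ (φ f) = MvPolynomial.eval (fun q => MvPolynomial.eval d (F q)) f := by
        simp only [ψ, φ, RingHom.comp_apply, Ideal.Quotient.lift_mk, AlgHom.toRingHom_eq_coe,
          RingHom.coe_coe]
        rw [eval_bind]
      rw [e]
      exact Ideal.mem_bot
    · rintro ⟨P, hP⟩
      obtain ⟨M, hM, hPM⟩ := Ideal.exists_le_maximal P.asIdeal P.2.ne_top
      have hM' : (M.comap (Ideal.Quotient.mk I)).IsMaximal :=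
        Ideal.comap_isMaximal_of_surjective _ Ideal.Quotient.mk_surjective
      obtain ⟨d, hd⟩ := (MvPolynomial.isMaximal_iff_eq_vanishingIdeal_singleton).1 hM'
      have hd' : ∀ f, Ideal.Quotient.mk I f ∈ M → MvPolynomial.eval d f = 0 := by
        intro f hf
        have : f ∈ M.comap (Ideal.Quotient.mk I) := hf
        rw [hd, MvPolynomial.mem_vanishingIdeal_singleton_iff] at this
        exact this
      refine ⟨d, ?_, ?_⟩
      · intro f hf
        apply hd'
        rw [Ideal.Quotient.eq_zero_iff_mem.2 hf]; exact M.zero_mem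
      · intro q
        have h1 : (MvPolynomial.X q - MvPolynomial.C (glCoords k N g q)) ∈ (ptMap k N g).asIdeal := by
          rw [mem_ptMap]; simp
        rw [← hP] at h1
        have h2 := hd' _ (hPM h1)
        simp only [map_sub, AlgHom.toRingHom_eq_coe, RingHom.coe_coe] at h2
        rw [MvPolynomial.bind₁_X_right, MvPolynomial.bind₁_C_right, MvPolynomial.eval_C] at h2
        exact (sub_eq_zero.1 h2).symm
  have hOu : O = ⋃ C ∈ S, (ptMap k N ⁻¹' (PrimeSpectrum.zeroLocus (Set.range C.g))) ∩
      (ptMap k N ⁻¹' (PrimeSpectrum.zeroLocus {C.f})ᶜ) := by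
    rw [hOp, ← hS]
    ext g
    simp [PrimeSpectrum.ConstructibleSetData.toSet, PrimeSpectrum.BasicConstructibleSetData.toSet]
  rw [hOu] at hne ⊢
  refine exists_open_of_union _ _ (fun C => ?_) (fun C => ?_) S hne
  · exact (PrimeSpectrum.isClosed_zeroLocus _).preimage ptMap_inducing.continuous
  · exact (PrimeSpectrum.isClosed_zeroLocus _).isOpen_compl.preimage ptMap_inducing.continuous

lemma coords_of_vanish {S : Set (GL (Fin N) k)} (hS : IsClosed S)
    (d : ((Fin N × Fin N) ⊕ (Fin N × Fin N)) → k)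
    (hd : ∀ f : MvPolynomial ((Fin N × Fin N) ⊕ (Fin N × Fin N)) k,
      (∀ g ∈ S, MvPolynomial.eval (glCoords k N g) f = 0) → MvPolynomial.eval d f = 0) :
    ∃ g ∈ S, glCoords k N g = d := by
  let P : Matrix (Fin N) (Fin N) k := Matrix.of fun i j => d (Sum.inl (i, j))
  let Q : Matrix (Fin N) (Fin N) k := Matrix.of fun i j => d (Sum.inr (i, j))
  have hPQ : P * Q = 1 := by
    ext i j
    have := hd (∑ l, MvPolynomial.X (Sum.inl (i, l)) * MvPolynomial.X (Sum.inr (l, j)) -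
      MvPolynomial.C ((1 : Matrix (Fin N) (Fin N) k) i j)) (by
        intro g _
        have h1 : (g : Matrix (Fin N) (Fin N) k) * ((g⁻¹ : GL (Fin N) k) : Matrix (Fin N) (Fin N) k)
          = 1 := by rw [← Units.val_mul]; simp
        rw [← h1]
        simp only [map_sub, map_sum, map_mul, MvPolynomial.eval_X, MvPolynomial.eval_C, glCoords,
          Sum.elim_inl, Sum.elim_inr, Matrix.mul_apply, sub_self])
    simp only [map_sub, map_sum, map_mul, MvPolynomial.eval_X, MvPolynomial.eval_C,
      sub_eq_zero] at this
    rw [← this, Matrix.mul_apply]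
    rfl
  let g : GL (Fin N) k := ⟨P, Q, hPQ, mul_eq_one_comm.1 hPQ⟩
  have hg : glCoords k N g = d := by
    funext q
    rcases q with ⟨i, j⟩ | ⟨i, j⟩ <;> rfl
  refine ⟨g, ?_, hg⟩
  rw [← zClosed_iff] at hS
  obtain ⟨I, rfl⟩ := hS
  intro f hf
  rw [hg]
  exact hd f fun g hg => hg f hf

/-- the orbit of `y` under left mult by `H` and right mult by `B` -/
def orb (H B : Subgroup (GL (Fin N) k)) (y : GL (Fin N) k) : Set (GL (Fin N) k) :=
  {g | ∃ h ∈ H, ∃ b ∈ B, g = h * y * b}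

open MvPolynomial in
lemma orb_open (H B : Subgroup (GL (Fin N) k)) (hH : IsClosed (H : Set (GL (Fin N) k)))
    (hB : IsClosed (B : Set (GL (Fin N) k))) (y : GL (Fin N) k) :
    ∃ V : Set (GL (Fin N) k), IsOpen V ∧ (V ∩ orb H B y).Nonempty ∧
      V ∩ closure (orb H B y) ⊆ orb H B y := by
  let σ := (Fin N × Fin N) ⊕ (Fin N × Fin N)
  let vH : Set (MvPolynomial σ k) := {f | ∀ g ∈ H, eval (glCoords k N g) f = 0}
  let vB : Set (MvPolynomial σ k) := {f | ∀ g ∈ B, eval (glCoords k N g) f = 0}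
  let I : Ideal (MvPolynomial (σ ⊕ σ) k) :=
    Ideal.span ((rename Sum.inl '' vH) ∪ (rename Sum.inr '' vB))
  let F : σ → MvPolynomial (σ ⊕ σ) k := Sum.elim
    (fun p => ∑ l', (∑ l, X (Sum.inl (Sum.inl (p.1, l))) *
      C ((y : Matrix (Fin N) (Fin N) k) l l')) * X (Sum.inr (Sum.inl (l', p.2))))
    (fun p => ∑ l', (∑ l, X (Sum.inr (Sum.inr (p.1, l))) *
      C (((y⁻¹ : GL (Fin N) k) : Matrix (Fin N) (Fin N) k) l l')) * X (Sum.inl (Sum.inr (l', p.2))))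
  have hF : ∀ h b : GL (Fin N) k, ∀ q, glCoords k N (h * y * b) q =
      eval (Sum.elim (glCoords k N h) (glCoords k N b)) (F q) := by
    intro h b q
    rcases q with ⟨i, j⟩ | ⟨i, j⟩
    · simp only [glCoords, F, Sum.elim_inl, Sum.elim_inr, Units.val_mul, Matrix.mul_apply, map_sum, map_mul,
        eval_X, eval_C]
    · simp only [glCoords, F, Sum.elim_inl, Sum.elim_inr, _root_.mul_inv_rev, ← mul_assoc,
        Units.val_mul, Matrix.mul_apply, map_sum, map_mul,
        eval_X, eval_C]
  refine chevalley I F _ ?_ ⟨1 * y * 1, 1, H.one_mem, 1, B.one_mem, rfl⟩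
  intro g
  constructor
  · rintro ⟨h, hh, b, hb, rfl⟩
    refine ⟨Sum.elim (glCoords k N h) (glCoords k N b), ?_, hF h b⟩
    intro f hf
    have : I ≤ RingHom.ker (eval (Sum.elim (glCoords k N h) (glCoords k N b))) := by
      rw [Ideal.span_le]
      rintro _ (⟨f, hf, rfl⟩ | ⟨f, hf, rfl⟩)
      · simp only [SetLike.mem_coe, RingHom.mem_ker, eval_rename]
        exact hf h hh
      · simp only [SetLike.mem_coe, RingHom.mem_ker, eval_rename]
        exact hf b hb
    exact this hf
  · rintro ⟨d, hd, hg⟩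
    obtain ⟨h, hh, hhd⟩ := coords_of_vanish hH (d ∘ Sum.inl) (by
      intro f hf
      have := hd _ (Ideal.subset_span (Or.inl ⟨f, hf, rfl⟩))
      rwa [eval_rename] at this)
    obtain ⟨b, hb, hbd⟩ := coords_of_vanish hB (d ∘ Sum.inr) (by
      intro f hf
      have := hd _ (Ideal.subset_span (Or.inr ⟨f, hf, rfl⟩))
      rwa [eval_rename] at this)
    have hdd : d = Sum.elim (glCoords k N h) (glCoords k N b) := by
      rw [hhd, hbd]; exact (Sum.elim_comp_inl_inr d).symm
    refine ⟨h, hh, b, hb, ?_⟩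
    apply Units.ext
    ext i j
    have e := hg (Sum.inl (i, j))
    rw [hdd, ← hF] at e
    exact e

lemma orb_stable (H B : Subgroup (GL (Fin N) k)) (y : GL (Fin N) k) {h b : GL (Fin N) k}
    (hh : h ∈ H) (hb : b ∈ B) {g : GL (Fin N) k} (hg : g ∈ orb H B y) : h * g * b ∈ orb H B y := by
  obtain ⟨h', hh', b', hb', rfl⟩ := hg
  exact ⟨h * h', H.mul_mem hh hh', b' * b, B.mul_mem hb' hb, by group⟩

lemma orb_compl_closed (H B : Subgroup (GL (Fin N) k)) (hH : IsClosed (H : Set (GL (Fin N) k)))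
    (hB : IsClosed (B : Set (GL (Fin N) k))) (y : GL (Fin N) k) :
    IsClosed (closure (orb H B y) \ orb H B y) := by
  obtain ⟨V, hV, ⟨v, hvV, hv⟩, hVs⟩ := orb_open H B hH hB y
  let W : Set (GL (Fin N) k) := ⋃ (h : H) (b : B),
    (fun g => (h : GL (Fin N) k) * g * (b : GL (Fin N) k)) ⁻¹' V
  have hW : IsOpen W := isOpen_iUnion fun h => isOpen_iUnion fun b =>
    hV.preimage (continuous_mul_mul _ _)
  have : closure (orb H B y) \ orb H B y = closure (orb H B y) \ W := by
    ext g
    refine and_congr_right fun hg => not_congr ?_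
    simp only [W, Set.mem_iUnion, Set.mem_preimage]
    constructor
    · rintro ⟨h, hh, b, hb, rfl⟩
      obtain ⟨h', hh', b', hb', rfl⟩ := hv
      refine ⟨⟨h' * h⁻¹, H.mul_mem hh' (H.inv_mem hh)⟩,
        ⟨b⁻¹ * b', B.mul_mem (B.inv_mem hb) hb'⟩, ?_⟩
      convert hvV using 1
      simp only
      group
    · rintro ⟨⟨h, hh⟩, ⟨b, hb⟩, hgV⟩
      have h1 : h * g * b ∈ closure (orb H B y) := by
        have := mem_closure_image (s := orb H B y) (continuous_mul_mul h b).continuousAt hg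
        refine closure_mono ?_ this
        rintro _ ⟨x, hx, rfl⟩
        exact orb_stable H B y hh hb hx
      have h2 := hVs ⟨hgV, h1⟩
      have h3 := orb_stable H B y (H.inv_mem hh) (B.inv_mem hb) h2
      convert h3 using 1
      group
  rw [this, Set.diff_eq]
  exact isClosed_closure.inter hW.isClosed_compl

lemma exists_trans (H B A : Subgroup (GL (Fin N) k)) (hH : IsClosed (H : Set (GL (Fin N) k)))
    (hB : IsClosed (B : Set (GL (Fin N) k)))
    (hnorm : ∀ a ∈ A, ∀ h ∈ H, a * h * a⁻¹ ∈ H) :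
    ∃ Y : Set (GL (Fin N) k), IsClosed Y ∧ Y.Nonempty ∧
      (∀ a ∈ A, ∀ b ∈ B, ∀ y ∈ Y, a * y * b ∈ Y) ∧
      (∀ h ∈ H, ∀ b ∈ B, ∀ y ∈ Y, h * y * b ∈ Y) ∧
      ∀ y0 ∈ Y, (∀ a ∈ A, y0⁻¹ * a * y0 ∈ B) → ∀ y1 ∈ Y, ∃ h ∈ H, ∃ b ∈ B, y1 = h * y0 * b := by
  let 𝒮 : Set (TopologicalSpace.Closeds (GL (Fin N) k)) := {Y | (Y : Set (GL (Fin N) k)).Nonempty ∧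
      (∀ a ∈ A, ∀ b ∈ B, ∀ y ∈ (Y : Set (GL (Fin N) k)), a * y * b ∈ (Y : Set (GL (Fin N) k))) ∧
      (∀ h ∈ H, ∀ b ∈ B, ∀ y ∈ (Y : Set (GL (Fin N) k)), h * y * b ∈ (Y : Set (GL (Fin N) k)))}
  have hne : 𝒮.Nonempty := ⟨⊤, ⟨1, trivial⟩, fun _ _ _ _ _ _ => trivial,
    fun _ _ _ _ _ _ => trivial⟩
  obtain ⟨Y, ⟨hY1, hY2, hY3⟩, hmin⟩ :=
    (wellFounded_lt (α := TopologicalSpace.Closeds (GL (Fin N) k))).has_min 𝒮 hne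
  have hmin' : ∀ Z : Set (GL (Fin N) k), IsClosed Z → Z ⊆ Y → Z.Nonempty →
      (∀ a ∈ A, ∀ b ∈ B, ∀ y ∈ Z, a * y * b ∈ Z) →
      (∀ h ∈ H, ∀ b ∈ B, ∀ y ∈ Z, h * y * b ∈ Z) → (Y : Set (GL (Fin N) k)) ⊆ Z := by
    intro Z hZ hZY h1 h2 h3
    by_contra hcon
    exact hmin ⟨Z, hZ⟩ ⟨h1, h2, h3⟩ (lt_of_le_not_ge hZY hcon)
  refine ⟨Y, Y.isClosed, hY1, hY2, hY3, ?_⟩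
  intro y0 hy0 hfix
  have horbA : ∀ a ∈ A, ∀ b ∈ B, ∀ g ∈ orb H B y0, a * g * b ∈ orb H B y0 := by
    rintro a ha b hb _ ⟨h, hh, b', hb', rfl⟩
    exact ⟨a * h * a⁻¹, hnorm a ha h hh, (y0⁻¹ * a * y0) * b' * b,
      B.mul_mem (B.mul_mem (hfix a ha) hb') hb, by group⟩
  have horbH : ∀ h ∈ H, ∀ b ∈ B, ∀ g ∈ orb H B y0, h * g * b ∈ orb H B y0 :=
    fun h hh b hb g hg => orb_stable H B y0 hh hb hg
  have hcl : ∀ a b : GL (Fin N) k, (∀ g ∈ orb H B y0, a * g * b ∈ orb H B y0) →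
      ∀ g ∈ closure (orb H B y0), a * g * b ∈ closure (orb H B y0) := by
    intro a b hab g hg
    have := mem_closure_image (s := orb H B y0) (continuous_mul_mul a b).continuousAt hg
    refine closure_mono ?_ this
    rintro _ ⟨x, hx, rfl⟩
    exact hab x hx
  have hsub : closure (orb H B y0) ⊆ Y := by
    refine closure_minimal ?_ Y.isClosed
    rintro _ ⟨h, hh, b, hb, rfl⟩
    exact hY3 h hh b hb y0 hy0
  have hmem : y0 ∈ orb H B y0 := ⟨1, H.one_mem, 1, B.one_mem, by group⟩
  have hYc : (Y : Set (GL (Fin N) k)) ⊆ closure (orb H B y0) :=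
    hmin' _ isClosed_closure hsub ⟨y0, subset_closure hmem⟩
      (fun a ha b hb => hcl a b (horbA a ha b hb)) (fun a ha b hb => hcl a b (horbH a ha b hb))
  intro y1 hy1
  by_contra hcon
  have hdiff : ∀ a b : GL (Fin N) k, (∀ g ∈ orb H B y0, a * g * b ∈ orb H B y0) →
      (∀ g ∈ orb H B y0, a⁻¹ * g * b⁻¹ ∈ orb H B y0) →
      ∀ g ∈ closure (orb H B y0) \ orb H B y0, a * g * b ∈ closure (orb H B y0) \ orb H B y0 := by
    rintro a b h1 h2 g ⟨hg1, hg2⟩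
    refine ⟨hcl a b h1 g hg1, fun h3 => hg2 ?_⟩
    convert h2 _ h3 using 1
    group
  have := hmin' _ (orb_compl_closed H B hH hB y0) (Set.diff_subset.trans hsub)
    ⟨y1, hYc hy1, hcon⟩
    (fun a ha b hb => hdiff a b (horbA a ha b hb) (horbA _ (A.inv_mem ha) _ (B.inv_mem hb)))
    (fun a ha b hb => hdiff a b (horbH a ha b hb) (horbH _ (H.inv_mem ha) _ (B.inv_mem hb)))
  exact (this hy0).2 hmem

lemma preconn_reg_const {S : Set (GL (Fin N) k)} (hS : IsPreconnected S) {r : GL (Fin N) k → k}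
    (hr : Reg r) (E : Finset k) (hE : ∀ g ∈ S, r g ∈ E) {g₀ g₁ : GL (Fin N) k} (h₀ : g₀ ∈ S)
    (h₁ : g₁ ∈ S) : r g₁ = r g₀ := by
  classical
  by_contra hne
  have hc1 : IsClosed {g | r g - r g₀ = 0} := (hr.sub (Reg.const _)).isClosed
  have hc2 : IsClosed {g | ∏ e ∈ E.erase (r g₀), (r g - e) = 0} :=
    (Reg.prod _ fun e => hr.sub (Reg.const _)).isClosed
  obtain ⟨g, hg, hg1, hg2⟩ := isPreconnected_closed_iff.1 hS _ _ hc1 hc2 (by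
      intro g hg
      by_cases h : r g = r g₀
      · left; simpa [sub_eq_zero] using h
      · right
        exact Finset.prod_eq_zero (Finset.mem_erase.2 ⟨h, hE g hg⟩) (sub_self _))
    ⟨g₀, h₀, sub_self _⟩
    ⟨g₁, h₁, Finset.prod_eq_zero (Finset.mem_erase.2 ⟨hne, hE g₁ h₁⟩) (sub_self _)⟩
  have hg1 : r g = r g₀ := sub_eq_zero.1 hg1
  obtain ⟨e, he, he'⟩ := Finset.prod_eq_zero_iff.1 (show ∏ e ∈ E.erase (r g₀), (r g - e) = 0 from hg2)
  rw [sub_eq_zero, hg1] at he'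
  exact (Finset.mem_erase.1 he).1 he'.symm

lemma point_of_hom (A : Subgroup (GL (Fin N) k)) (hcl : IsClosed (A : Set (GL (Fin N) k)))
    (hdiag : ∀ a ∈ A, IsDiag k N a) (X : Subgroup (A →* kˣ)) (χ : Fin N → X)
    (hχ : ∀ i (a : A), (((χ i : A →* kˣ) a : kˣ) : k) = (a : GL (Fin N) k) i i)
    (hχ' : ∀ i (a : A), (((χ i : A →* kˣ)⁻¹ a : kˣ) : k) = ((a : GL (Fin N) k)⁻¹ : GL (Fin N) k) i i)
    (F : X →* kˣ) : ∃ a ∈ A, ∀ i, (a : Matrix (Fin N) (Fin N) k) i i = F (χ i) := by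
  classical
  let σ := (Fin N × Fin N) ⊕ (Fin N × Fin N)
  let Q : σ → MonoidAlgebra k X := Sum.elim
    (fun p => if p.1 = p.2 then MonoidAlgebra.single (χ p.1) 1 else 0)
    (fun p => if p.1 = p.2 then MonoidAlgebra.single (χ p.1)⁻¹ 1 else 0)
  let Φ : MvPolynomial σ k →ₐ[k] MonoidAlgebra k X := MvPolynomial.aeval Q
  have hΦ : ∀ (G : X →* k) (f : MvPolynomial σ k), MonoidAlgebra.lift k k X G (Φ f) =
      MvPolynomial.eval (fun q => MonoidAlgebra.lift k k X G (Q q)) f := by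
    intro G f
    have h : (MonoidAlgebra.lift k k X G).comp Φ =
        MvPolynomial.aeval (fun q => MonoidAlgebra.lift k k X G (Q q)) := by
      ext q; simp [Φ]
    have := congrArg (fun ψ => ψ f) h
    simpa [MvPolynomial.aeval_eq_eval] using this
  let d : σ → k := fun q => MonoidAlgebra.lift k k X ((Units.coeHom k).comp F) (Q q)
  obtain ⟨a, ha, had⟩ := coords_of_vanish hcl d (by
    intro f hf
    rw [← hΦ]
    suffices Φ f = 0 by rw [this, map_zero]
    let ι : X → (A →* k) := fun x => (Units.coeHom k).comp (x : A →* kˣ)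
    have hι : Function.Injective ι := by
      intro x y hxy
      apply Subtype.ext
      ext a
      exact congrArg (fun ψ : A →* k => ψ a) hxy
    have hli := (linearIndependent_monoidHom A k).comp ι hι
    rw [linearIndependent_iff] at hli
    have h0 := hli (Φ f).coeff (by
      funext a
      let G : X →* k := (Units.coeHom k).comp ((MonoidHom.eval a).comp X.subtype)
      have h1 : (fun q => MonoidAlgebra.lift k k X G (Q q)) = glCoords k N a := by
        funext q
        rcases q with ⟨i, j⟩ | ⟨i, j⟩
        · by_cases hij : i = j
          · subst hij
            simp [Q, glCoords, G, hχ]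
          · simp [Q, glCoords, hij, hdiag a a.2 i j hij]
        · by_cases hij : i = j
          · subst hij
            simp only [Q, glCoords, Sum.elim_inr, if_true, MonoidAlgebra.lift_single, one_smul]
            exact hχ' i a
          · have := hdiag _ (A.inv_mem a.2) i j hij
            simp only [Q, glCoords, Sum.elim_inr, hij, if_false, map_zero]
            exact this.symm
      have h2 := hΦ G f
      rw [h1, hf a a.2, MonoidAlgebra.lift_apply] at h2
      rw [Finsupp.linearCombination_apply, Finsupp.sum, Finset.sum_apply]
      exact h2)
    ext x
    rw [h0]; rfl)
  refine ⟨a, ha, fun i => ?_⟩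
  have := congrFun had (Sum.inl (i, i))
  simpa [glCoords, d, Q] using this

lemma exists_dual_ne_zero {M ι : Type*} [AddCommGroup M] [Module.Finite ℤ M] [Module.Free ℤ M]
    [Finite ι] (v : ι → M) (hv : ∀ i, v i ≠ 0) : ∃ φ : M →ₗ[ℤ] ℤ, ∀ i, φ (v i) ≠ 0 := by
  classical
  have := Fintype.ofFinite ι
  let b := Module.finBasis ℤ M
  let P : ι → Polynomial ℤ := fun i => ∑ l, Polynomial.C (b.repr (v i) l) * Polynomial.X ^ (l : ℕ)
  have hP : ∀ i, P i ≠ 0 := by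
    intro i h
    apply hv i
    apply b.repr.injective
    ext l
    have := congrArg (fun p => Polynomial.coeff p (l : ℕ)) h
    simpa [P, Polynomial.finset_sum_coeff, Polynomial.coeff_C_mul, Polynomial.coeff_X_pow,
      Fin.val_inj] using this
  have hprod : ∏ i, P i ≠ 0 := Finset.prod_ne_zero_iff.2 fun i _ => hP i
  obtain ⟨c, hc⟩ : ∃ c : ℤ, (∏ i, P i).eval c ≠ 0 := by
    by_contra! h
    exact hprod (Polynomial.funext (by simpa using h))
  refine ⟨b.constr ℤ fun l => c ^ (l : ℕ), fun i => ?_⟩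
  rw [Polynomial.eval_prod, Finset.prod_ne_zero_iff] at hc
  have := hc i (Finset.mem_univ i)
  rw [Module.Basis.constr_apply_fintype]
  simpa [P, Polynomial.eval_finset_sum] using this

lemma torus_weights (A : Subgroup (GL (Fin N) k)) (hcl : IsClosed (A : Set (GL (Fin N) k)))
    (hconn : IsPreconnected (A : Set (GL (Fin N) k)))
    (hdiag : ∀ a ∈ A, IsDiag k N a) : ∃ m : Fin N → ℤ,
      (∀ i j, m i = m j → ∀ a ∈ A, (a : Matrix (Fin N) (Fin N) k) i i = a j j) ∧
      ∀ s : kˣ, ∃ a ∈ A, ∀ i, (a : Matrix (Fin N) (Fin N) k) i i = ((s ^ m i : kˣ) : k) := by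
  classical
  have hmul : ∀ a b : GL (Fin N) k, IsDiag k N a → ∀ i, ((a * b : GL (Fin N) k) :
      Matrix (Fin N) (Fin N) k) i i = (a : Matrix (Fin N) (Fin N) k) i i * b i i := by
    intro a b ha i
    rw [Units.val_mul, Matrix.mul_apply]
    refine Finset.sum_eq_single i (fun j _ hj => ?_) (by simp)
    rw [ha i j hj.symm, zero_mul]
  let χ₀ : Fin N → (A →* kˣ) := fun i =>
    { toFun := fun a => ⟨(a : GL (Fin N) k) i i, ((a : GL (Fin N) k)⁻¹ : GL (Fin N) k) i i, by
          rw [← hmul _ _ (hdiag a a.2)]; simp, by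
          rw [← hmul _ _ (hdiag _ (A.inv_mem a.2))]; simp⟩
      map_one' := by ext; simp
      map_mul' := by
        intro a b; ext
        simp only [Units.val_mul]
        rw [← hmul _ _ (hdiag a a.2)]; simp }
  let X : Subgroup (A →* kˣ) := Subgroup.closure (Set.range χ₀)
  let χ : Fin N → X := fun i => ⟨χ₀ i, Subgroup.subset_closure ⟨i, rfl⟩⟩
  -- regularity of characters
  have hreg : ∀ x ∈ X, ∃ r r' : GL (Fin N) k → k, Reg r ∧ Reg r' ∧ ∀ a : A, (x a : k) = r a ∧
      ((x a)⁻¹ : kˣ) = r' a := by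
    intro x hx
    induction hx using Subgroup.closure_induction with
    | mem x hx =>
      obtain ⟨i, rfl⟩ := hx
      exact ⟨_, _, Reg.entry i i, Reg.inv_entry i i, fun a => ⟨rfl, rfl⟩⟩
    | one => exact ⟨_, _, Reg.const 1, Reg.const 1, fun a => ⟨by simp, by simp⟩⟩
    | mul x y _ _ ihx ihy =>
      obtain ⟨r, r', hr, hr', h⟩ := ihx
      obtain ⟨s, s', hs, hs', h'⟩ := ihy
      refine ⟨_, _, hr.mul hs, hr'.mul hs', fun a => ⟨?_, ?_⟩⟩
      · rw [MonoidHom.mul_apply, Units.val_mul, (h a).1, (h' a).1]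
      · rw [MonoidHom.mul_apply, _root_.mul_inv, Units.val_mul, (h a).2, (h' a).2]
    | inv x _ ih =>
      obtain ⟨r, r', hr, hr', h⟩ := ih
      refine ⟨_, _, hr', hr, fun a => ⟨?_, ?_⟩⟩
      · rw [MonoidHom.inv_apply, (h a).2]
      · rw [MonoidHom.inv_apply, inv_inv, (h a).1]
  have htf : ∀ x : X, ∀ n : ℕ, n ≠ 0 → x ^ n = 1 → x = 1 := by
    intro x n hn hx
    apply Subtype.ext
    ext a
    obtain ⟨r, _, hr, _, h⟩ := hreg x x.2
    have h1 : ∀ b : A, r b ^ n = 1 := by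
      intro b
      rw [← (h b).1, ← Units.val_pow_eq_pow_val, ← MonoidHom.pow_apply]
      have : ((x : A →* kˣ)) ^ n = 1 := by rw [← Subgroup.coe_pow, hx]; rfl
      rw [this]; simp
    have := preconn_reg_const hconn hr (Polynomial.nthRoots n (1 : k)).toFinset (by
      intro g hg
      rw [Multiset.mem_toFinset, Polynomial.mem_nthRoots (Nat.pos_of_ne_zero hn)]
      exact h1 ⟨g, hg⟩) (A.one_mem) a.2
    rw [(h a).1, this]
    have h2 := (h 1).1
    rw [map_one] at h2
    rw [OneMemClass.coe_one] at h2
    rw [← h2]; simp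
  have hfg : Module.Finite ℤ (Additive X) := by
    rw [Module.Finite.iff_addGroup_fg]
    have : Group.FG X := (Group.fg_iff_subgroup_fg X).2
      ⟨(Set.finite_range χ₀).toFinset, by simp [X]⟩
    infer_instance
  have hfree : Module.IsTorsionFree ℤ (Additive X) := by
    refine Module.IsTorsionFree.of_smul_eq_zero ?_
    intro n x hx
    by_contra! hcon
    obtain ⟨hn, hx0⟩ := hcon
    apply hx0
    have h1 : n.natAbs • x = 0 := by
      rcases Int.natAbs_eq n with h | h
      · rw [h, natCast_zsmul] at hx; exact hx
      · rw [h, neg_smul, neg_eq_zero, natCast_zsmul] at hx; exact hx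
    exact htf x.toMul n.natAbs (by simpa using hn) h1
  let J := {p : Fin N × Fin N // χ p.1 ≠ χ p.2}
  obtain ⟨φ, hφ⟩ := exists_dual_ne_zero (fun p : J =>
    Additive.ofMul (χ p.1.1) - Additive.ofMul (χ p.1.2)) (by
      rintro ⟨p, hp⟩ h
      exact hp (Additive.ofMul.injective (sub_eq_zero.1 h)))
  refine ⟨fun i => φ (Additive.ofMul (χ i)), ?_, ?_⟩
  · intro i j hij a ha
    have : χ i = χ j := by
      by_contra h
      apply hφ ⟨(i, j), h⟩
      rw [map_sub, sub_eq_zero]; exact hij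
    have h2 : χ₀ i ⟨a, ha⟩ = χ₀ j ⟨a, ha⟩ := by
      rw [show χ₀ i = (χ i : A →* kˣ) from rfl, this]
    exact congrArg Units.val h2
  · intro s
    let F : X →* kˣ :=
      { toFun := fun x => s ^ (φ (Additive.ofMul x))
        map_one' := by simp
        map_mul' := by intro x y; rw [ofMul_mul, map_add, _root_.zpow_add] }
    obtain ⟨a, ha, h⟩ := point_of_hom A hcl hdiag X χ (fun i a => rfl) (fun i a => rfl) F
    exact ⟨a, ha, h⟩

/-- upper triangular invertible matrices -/
def brl (k : Type*) [Field k] (N : ℕ) : Subgroup (GL (Fin N) k) where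
  carrier := {g | (g : Matrix (Fin N) (Fin N) k).BlockTriangular id}
  mul_mem' := by
    intro a b ha hb
    simpa using Matrix.BlockTriangular.mul ha hb
  one_mem' := by
    simpa using Matrix.blockTriangular_one
  inv_mem' := by
    intro a ha
    simp only [Set.mem_setOf_eq, Matrix.coe_units_inv] at ha ⊢
    haveI : Invertible (a : Matrix (Fin N) (Fin N) k) := a.invertible
    exact Matrix.blockTriangular_inv_of_blockTriangular ha

lemma mem_brl (g : GL (Fin N) k) : g ∈ brl k N ↔ ∀ i j : Fin N, j < i →
    (g : Matrix (Fin N) (Fin N) k) i j = 0 := Iff.rfl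

lemma brl_closed : IsClosed (brl k N : Set (GL (Fin N) k)) := by
  have : (brl k N : Set (GL (Fin N) k)) = ⋂ (i : Fin N) (j : Fin N) (_ : j < i),
      {g : GL (Fin N) k | (g : Matrix (Fin N) (Fin N) k) i j = 0} := by
    ext g
    simp [mem_brl]
  rw [this]
  exact isClosed_iInter fun i => isClosed_iInter fun j => isClosed_iInter fun _ =>
    (Reg.entry i j).isClosed

lemma diag_mem_brl {g : GL (Fin N) k} (hg : IsDiag k N g) : g ∈ brl k N :=
  (mem_brl g).2 fun i j h => hg i j h.ne'

/-- Bruhat-type column reduction. -/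
lemma bruhat (m : Fin N → ℤ) (y : GL (Fin N) k) : ∃ (b : GL (Fin N) k) (σ : Equiv.Perm (Fin N)),
    b ∈ brl k N ∧ ∀ i j, ((y * b : GL (Fin N) k) : Matrix (Fin N) (Fin N) k) i j ≠ 0 →
      m (σ j) ≤ m i := by
  classical
  let key : Fin N → ℤ := fun i => m i * N + i
  have hkey : ∀ i j, key i ≤ key j → m i ≤ m j := by
    intro i j h
    by_contra hlt
    push Not at hlt
    have h1 : (i : ℤ) ≥ 0 := by positivity
    have h2 : (j : ℤ) < N := by exact_mod_cast j.2
    have h3 : (m j + 1) * N ≤ m i * (N : ℤ) := by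
      apply mul_le_mul_of_nonneg_right (by omega) (by positivity)
    simp only [key] at h
    linarith
  have hkinj : ∀ i j, key i = key j → i = j := by
    intro i j h
    have h1 := hkey i j h.le
    have h2 := hkey j i h.ge
    have : m i = m j := le_antisymm h1 h2
    simp only [key, this] at h
    ext
    omega
  let good : Fin N → (Fin N → k) → Prop := fun j c => c j = 1 ∧ ∀ i, j < i → c i = 0
  let ym : Matrix (Fin N) (Fin N) k := y
  let lead : (Fin N → k) → Fin N → Prop := fun v p => v p ≠ 0 ∧ ∀ q, key q < key p → v q = 0
  have hne : ∀ j c, good j c → ym *ᵥ c ≠ 0 := by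
    intro j c hc h
    have : c = 0 := by
      have h2 : (((y⁻¹ : GL (Fin N) k)) : Matrix (Fin N) (Fin N) k) *ᵥ (ym *ᵥ c) = 0 := by
        rw [h, Matrix.mulVec_zero]
      rw [Matrix.mulVec_mulVec] at h2
      have h3 : (((y⁻¹ : GL (Fin N) k)) : Matrix (Fin N) (Fin N) k) * ym = 1 := by
        simp only [ym, ← Units.val_mul, inv_mul_cancel, Units.val_one]
      rwa [h3, Matrix.one_mulVec] at h2
    have h1 := hc.1
    rw [this] at h1
    simp at h1
  have hlead : ∀ v : Fin N → k, v ≠ 0 → ∃ p, lead v p := by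
    intro v hv
    obtain ⟨i, hi⟩ := Function.ne_iff.1 hv
    obtain ⟨p, hp, hp'⟩ := Finset.exists_min_image (Finset.univ.filter fun i => v i ≠ 0) key
      ⟨i, by simpa using hi⟩
    refine ⟨p, by simpa using hp, fun q hq => ?_⟩
    by_contra h
    exact absurd (hp' q (by simpa using h)) (not_le.2 hq)
  have hmax : ∀ j, ∃ p c, good j c ∧ lead (ym *ᵥ c) p ∧
      ∀ p' c', good j c' → lead (ym *ᵥ c') p' → key p' ≤ key p := by
    intro j
    have hg : good j (Pi.single j 1) := ⟨by simp, fun i hi => by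
      rw [Pi.single_eq_of_ne hi.ne']⟩
    obtain ⟨p0, hp0⟩ := hlead _ (hne j _ hg)
    obtain ⟨p, hp, hp'⟩ := Finset.exists_max_image
      (Finset.univ.filter fun p => ∃ c, good j c ∧ lead (ym *ᵥ c) p) key
      ⟨p0, by simpa using ⟨_, hg, hp0⟩⟩
    simp only [Finset.mem_filter, Finset.mem_univ, true_and] at hp hp'
    obtain ⟨c, hc, hl⟩ := hp
    exact ⟨p, c, hc, hl, fun p' c' h1 h2 => hp' p' ⟨c', h1, h2⟩⟩
  choose σ c hc hl hm using hmax
  have hcontra : ∀ j j', j' < j → σ j ≠ σ j' := by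
    intro j j' hlt heq
    let t : k := (ym *ᵥ c j) (σ j) / (ym *ᵥ c j') (σ j)
    let c' : Fin N → k := c j - t • c j'
    have hg : good j c' := by
      constructor
      · simp [c', (hc j).1, (hc j').2 j hlt]
      · intro i hi
        simp [c', (hc j).2 i hi, (hc j').2 i (hlt.trans hi)]
    obtain ⟨p', hp'⟩ := hlead _ (hne j c' hg)
    have h1 := hm j p' c' hg hp'
    have hv : ym *ᵥ c' = ym *ᵥ c j - t • (ym *ᵥ c j') := by
      rw [Matrix.mulVec_sub, Matrix.mulVec_smul]
    have hnz : (ym *ᵥ c j') (σ j) ≠ 0 := by rw [heq]; exact (hl j').1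
    apply hp'.1
    rw [hv]
    rcases h1.lt_or_eq with h | h
    · have e1 := (hl j).2 p' h
      have e2 := (hl j').2 p' (by rw [← heq]; exact h)
      simp [e1, e2]
    · rw [hkinj _ _ h]
      simp only [Pi.sub_apply, Pi.smul_apply, smul_eq_mul, t]
      field_simp
      ring
  have hinj : Function.Injective σ := by
    intro j j' h
    rcases lt_trichotomy j j' with h1 | h1 | h1
    · exact absurd h.symm (hcontra _ _ h1)
    · exact h1
    · exact absurd h (hcontra _ _ h1)
  let bm : Matrix (Fin N) (Fin N) k := Matrix.of fun i j => c j i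
  have htri : bm.BlockTriangular id := fun i j h => (hc j).2 i h
  have hdet : bm.det = 1 := by
    rw [Matrix.det_of_upperTriangular htri]
    exact Finset.prod_eq_one fun i _ => (hc i).1
  refine ⟨Matrix.GeneralLinearGroup.mkOfDetNeZero bm (by rw [hdet]; exact one_ne_zero),
    Equiv.ofBijective σ (Finite.injective_iff_bijective.1 hinj), htri, ?_⟩
  intro i j hij
  have e : ((y * Matrix.GeneralLinearGroup.mkOfDetNeZero bm (by rw [hdet]; exact one_ne_zero) :
      GL (Fin N) k) : Matrix (Fin N) (Fin N) k) i j = (ym *ᵥ c j) i := by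
    rw [Units.val_mul]; rfl
  rw [e] at hij
  apply hkey
  by_contra h
  exact hij ((hl j).2 i (not_le.1 h))

lemma fixed_point_diag (A : Subgroup (GL (Fin N) k)) (hcl : IsClosed (A : Set (GL (Fin N) k)))
    (hconn : IsPreconnected (A : Set (GL (Fin N) k)))
    (hdiag : ∀ a ∈ A, IsDiag k N a) (Y : Set (GL (Fin N) k)) (hY : IsClosed Y) (hne : Y.Nonempty)
    (hst : ∀ a ∈ A, ∀ b ∈ brl k N, ∀ y ∈ Y, a * y * b ∈ Y) :
    ∃ y0 ∈ Y, ∀ a ∈ A, IsDiag k N (y0⁻¹ * a * y0) := by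
  classical
  obtain ⟨m, hm1, hm2⟩ := torus_weights A hcl hconn hdiag
  obtain ⟨y, hy⟩ := hne
  obtain ⟨b, σ, hb, hz⟩ := bruhat m y
  set z : GL (Fin N) k := y * b with hzdef
  let zm : Matrix (Fin N) (Fin N) k := z
  have hzY : z ∈ Y := by
    have := hst 1 A.one_mem b hb y hy
    rwa [one_mul] at this
  let Zp : Matrix (Fin N) (Fin N) (Polynomial k) := Matrix.of fun i j =>
    Polynomial.C (zm i j) * Polynomial.X ^ (m i - m (σ j)).toNat
  let G : ((Fin N × Fin N) ⊕ (Fin N × Fin N)) → Polynomial k :=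
    Sum.elim (fun p => Zp p.1 p.2) (fun p => Polynomial.C (zm.det)⁻¹ * Zp.adjugate p.1 p.2)
  have hs : ∀ s : kˣ, ∃ g ∈ Y, glCoords k N g = fun q => (G q).eval (s : k) := by
    intro s
    obtain ⟨a, ha, has⟩ := hm2 s
    let D : Matrix (Fin N) (Fin N) k := Matrix.diagonal fun j => ((s ^ (-m (σ j)) : kˣ) : k)
    have hDdet : D.det ≠ 0 := by
      rw [Matrix.det_diagonal]
      exact Finset.prod_ne_zero_iff.2 fun i _ => Units.ne_zero _
    let d : GL (Fin N) k := Matrix.GeneralLinearGroup.mkOfDetNeZero D hDdet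
    have hd : d ∈ brl k N := diag_mem_brl fun i j hij => Matrix.diagonal_apply_ne _ hij
    have ham : (a : Matrix (Fin N) (Fin N) k) = Matrix.diagonal fun i => ((s ^ m i : kˣ) : k) := by
      ext i j
      by_cases h : i = j
      · subst h; rw [Matrix.diagonal_apply_eq, has]
      · rw [Matrix.diagonal_apply_ne _ h, hdiag a ha i j h]
    have hval : ((a * z * d : GL (Fin N) k) : Matrix (Fin N) (Fin N) k) =
        Matrix.diagonal (fun i => ((s ^ m i : kˣ) : k)) * zm * D := by
      rw [Units.val_mul, Units.val_mul, ham]; rfl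
    have hentry : ∀ i j, ((a * z * d : GL (Fin N) k) : Matrix (Fin N) (Fin N) k) i j =
        (Zp i j).eval (s : k) := by
      intro i j
      rw [hval, Matrix.mul_diagonal, Matrix.diagonal_mul]
      simp only [Zp, Matrix.of_apply, Polynomial.eval_mul, Polynomial.eval_C, Polynomial.eval_pow,
        Polynomial.eval_X]
      by_cases h0 : zm i j = 0
      · simp [h0]
      · have hle := hz i j h0
        have : ((s ^ m i : kˣ) : k) * ((s ^ (-m (σ j)) : kˣ) : k) =
            (s : k) ^ (m i - m (σ j)).toNat := by
          rw [← Units.val_mul, ← _root_.zpow_add, ← Units.val_pow_eq_pow_val, ← zpow_natCast,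
            Int.toNat_of_nonneg (by omega), sub_eq_add_neg]
        rw [← this]; ring
    have hdet : ((a * z * d : GL (Fin N) k) : Matrix (Fin N) (Fin N) k).det = zm.det := by
      rw [hval, Matrix.det_mul, Matrix.det_mul, Matrix.det_diagonal, Matrix.det_diagonal]
      have : (∏ i, ((s ^ m i : kˣ) : k)) * (∏ j, ((s ^ (-m (σ j)) : kˣ) : k)) = 1 := by
        rw [Equiv.prod_comp σ (fun j => ((s ^ (-m j) : kˣ) : k)), ← Finset.prod_mul_distrib]
        refine Finset.prod_eq_one fun i _ => ?_
        rw [← Units.val_mul, ← _root_.zpow_add]; simp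
      rw [mul_right_comm, this, one_mul]
    have hmat : ((a * z * d : GL (Fin N) k) : Matrix (Fin N) (Fin N) k) =
        (Polynomial.evalRingHom (s : k)).mapMatrix Zp := by
      ext i j; rw [hentry]; rfl
    refine ⟨a * z * d, hst a ha d hd z hzY, ?_⟩
    funext q
    rcases q with ⟨i, j⟩ | ⟨i, j⟩
    · exact hentry i j
    · simp only [glCoords, G, Sum.elim_inr, Matrix.coe_units_inv, Matrix.inv_def, hdet,
        Ring.inverse_eq_inv', Matrix.smul_apply, smul_eq_mul, Polynomial.eval_mul,
        Polynomial.eval_C]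
      congr 1
      rw [hmat, ← RingHom.map_adjugate]; rfl
  have hvan : ∀ f : MvPolynomial ((Fin N × Fin N) ⊕ (Fin N × Fin N)) k,
      (∀ g ∈ Y, MvPolynomial.eval (glCoords k N g) f = 0) →
      MvPolynomial.eval (fun q => (G q).eval 0) f = 0 := by
    intro f hf
    have hev : ∀ s : k, (MvPolynomial.aeval G f).eval s =
        MvPolynomial.eval (fun q => (G q).eval s) f := by
      intro s
      have := MvPolynomial.map_aeval G (Polynomial.evalRingHom s) f
      simp only [Polynomial.coe_evalRingHom] at this
      rw [this]
      have h2 : (Polynomial.evalRingHom s).comp (algebraMap k (Polynomial k)) = RingHom.id k := by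
        ext x; simp
      rw [h2]; rfl
    have h0 : MvPolynomial.aeval G f = 0 := by
      have hinf : Set.Infinite ({0}ᶜ : Set k) := (Set.finite_singleton 0).infinite_compl
      refine Polynomial.eq_zero_of_infinite_isRoot _ (hinf.mono fun s hs' => ?_)
      obtain ⟨g, hg, hgs⟩ := hs (Units.mk0 s hs')
      show Polynomial.eval s _ = 0
      rw [hev]
      have := hf g hg
      rwa [hgs] at this
    rw [← hev, h0, Polynomial.eval_zero]
  obtain ⟨g, hg, hgc⟩ := coords_of_vanish hY _ hvan
  refine ⟨g, hg, fun a ha => ?_⟩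
  have hgij : ∀ i j, (g : Matrix (Fin N) (Fin N) k) i j ≠ 0 → m i = m (σ j) := by
    intro i j h
    have e : (g : Matrix (Fin N) (Fin N) k) i j = (Zp i j).eval 0 := congrFun hgc (Sum.inl (i, j))
    rw [e] at h
    simp only [Zp, Matrix.of_apply, Polynomial.eval_mul, Polynomial.eval_C, Polynomial.eval_pow,
        Polynomial.eval_X] at h
    have h1 := left_ne_zero_of_mul h
    have h2 := right_ne_zero_of_mul h
    have h3 := hz i j h1
    by_contra hne
    exact h2 (zero_pow (by omega))
  have hcomm : (a : Matrix (Fin N) (Fin N) k) * (g : Matrix (Fin N) (Fin N) k) = g *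
      Matrix.diagonal (fun j => (a : Matrix (Fin N) (Fin N) k) (σ j) (σ j)) := by
    have ham : (a : Matrix (Fin N) (Fin N) k) =
        Matrix.diagonal fun i => (a : Matrix (Fin N) (Fin N) k) i i := by
      ext i j
      by_cases h : i = j
      · subst h; rw [Matrix.diagonal_apply_eq]
      · rw [Matrix.diagonal_apply_ne _ h, hdiag a ha i j h]
    ext i j
    rw [Matrix.mul_diagonal, ham, Matrix.diagonal_mul, Matrix.diagonal_apply_eq]
    by_cases h : (g : Matrix (Fin N) (Fin N) k) i j = 0
    · simp [h]
    · rw [hm1 i (σ j) (hgij i j h) a ha]; ring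
  have hval : ((g⁻¹ * a * g : GL (Fin N) k) : Matrix (Fin N) (Fin N) k) =
      Matrix.diagonal (fun j => (a : Matrix (Fin N) (Fin N) k) (σ j) (σ j)) := by
    rw [Units.val_mul, Units.val_mul, mul_assoc, hcomm, ← mul_assoc, ← Units.val_mul,
      inv_mul_cancel, Units.val_one, one_mul]
  intro i j hij
  rw [hval, Matrix.diagonal_apply_ne _ hij]

lemma conj_isClosed (c : GL (Fin N) k) {S : Set (GL (Fin N) k)} (hS : IsClosed S) :
    IsClosed {g | c⁻¹ * g * c ∈ S} := hS.preimage (continuous_mul_mul c⁻¹ c)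

lemma fixed_point (A : Subgroup (GL (Fin N) k)) (hA : IsTorus k N A)
    (Y : Set (GL (Fin N) k)) (hY : IsClosed Y) (hne : Y.Nonempty)
    (hst : ∀ a ∈ A, ∀ b ∈ brl k N, ∀ y ∈ Y, a * y * b ∈ Y) :
    ∃ y0 ∈ Y, ∀ a ∈ A, IsDiag k N (y0⁻¹ * a * y0) := by
  obtain ⟨hcl, hconn, c, hc⟩ := hA
  rw [zClosed_iff] at hcl
  let A' : Subgroup (GL (Fin N) k) := A.map (MulAut.conj c).toMonoidHom
  have hA'eq : (A' : Set (GL (Fin N) k)) = (fun g => c * g * c⁻¹) '' A := rfl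
  have hA'eq2 : (A' : Set (GL (Fin N) k)) = {g | c⁻¹ * g * c ∈ (A : Set (GL (Fin N) k))} := by
    rw [hA'eq]
    ext g
    constructor
    · rintro ⟨a, ha, rfl⟩
      simpa [mul_assoc] using ha
    · intro h
      exact ⟨_, h, by group⟩
  obtain ⟨y0, hy0, hd⟩ := fixed_point_diag A' (by rw [hA'eq2]; exact conj_isClosed c hcl)
    (by rw [hA'eq]; exact hconn.image _ (continuous_mul_mul c c⁻¹).continuousOn)
    (by rintro _ ⟨a, ha, rfl⟩; exact hc a ha)
    ((fun g => c⁻¹ * g * 1) ⁻¹' Y) (hY.preimage (continuous_mul_mul c⁻¹ 1))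
    (by obtain ⟨y, hy⟩ := hne; exact ⟨c * y, by simpa using hy⟩)
    (by
      rintro _ ⟨a, ha, rfl⟩ b hb y hy
      have := hst a ha b hb _ hy
      simpa [mul_assoc] using this)
  refine ⟨c⁻¹ * y0 * 1, hy0, fun a ha => ?_⟩
  have := hd (c * a * c⁻¹) ⟨a, ha, rfl⟩
  have e : (c⁻¹ * y0 * 1)⁻¹ * a * (c⁻¹ * y0 * 1) = y0⁻¹ * (c * a * c⁻¹) * y0 := by group
  rw [e]; exact this

/-- Matrices supported on or above the `i`-th superdiagonal. -/
def JJ (k : Type*) [Field k] (N i : ℕ) : Submodule k (Matrix (Fin N) (Fin N) k) where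
  carrier := {x | ∀ j l : Fin N, (l : ℕ) < j + i → x j l = 0}
  add_mem' := by
    intro x y hx hy j l h
    rw [Matrix.add_apply, hx j l h, hy j l h, add_zero]
  zero_mem' := by intro j l _; rfl
  smul_mem' := by
    intro c x hx j l h
    rw [Matrix.smul_apply, hx j l h, smul_zero]

lemma JJ.mul {a b : ℕ} {x y : Matrix (Fin N) (Fin N) k} (hx : x ∈ JJ k N a) (hy : y ∈ JJ k N b) :
    x * y ∈ JJ k N (a + b) := by
  intro j l h
  rw [Matrix.mul_apply]
  refine Finset.sum_eq_zero fun q _ => ?_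
  by_cases h1 : (q : ℕ) < j + a
  · rw [hx j q h1, zero_mul]
  · rw [hy q l (by omega), mul_zero]

lemma JJ.mono {a b : ℕ} (h : b ≤ a) {x : Matrix (Fin N) (Fin N) k} (hx : x ∈ JJ k N a) :
    x ∈ JJ k N b := fun j l hl => hx j l (by omega)

lemma JJ.eq_zero {x : Matrix (Fin N) (Fin N) k} {i : ℕ} (hi : N ≤ i) (hx : x ∈ JJ k N i) :
    x = 0 := by
  ext j l
  exact hx j l (by omega)

lemma JJ.one : (1 : Matrix (Fin N) (Fin N) k) ∈ JJ k N 0 := by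
  intro j l h
  rw [Matrix.one_apply_ne]
  rintro rfl
  omega

lemma JJ.pow {a : ℕ} {x : Matrix (Fin N) (Fin N) k} (hx : x ∈ JJ k N a) (n : ℕ) :
    x ^ n ∈ JJ k N (n * a) := by
  induction n with
  | zero => simpa using JJ.one
  | succ n ih => rw [pow_succ, Nat.succ_mul]; exact JJ.mul ih hx

lemma JJ.of_brl {g : GL (Fin N) k} : (g : Matrix (Fin N) (Fin N) k) ∈ JJ k N 0 ↔ g ∈ brl k N := by
  rw [mem_brl]
  exact Iff.rfl

lemma JJ.unip {g : GL (Fin N) k} {i : ℕ} (hg : (g : Matrix (Fin N) (Fin N) k) - 1 ∈ JJ k N i) :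
    g ∈ brl k N := by
  rw [← JJ.of_brl]
  have := (JJ k N 0).add_mem (JJ.mono (Nat.zero_le _) hg) JJ.one
  rwa [sub_add_cancel] at this

lemma JJ.unip_inv {g : GL (Fin N) k} {i : ℕ} (hg : (g : Matrix (Fin N) (Fin N) k) - 1 ∈ JJ k N i) :
    ((g⁻¹ : GL (Fin N) k) : Matrix (Fin N) (Fin N) k) - 1 ∈ JJ k N i := by
  have h1 : ((g⁻¹ : GL (Fin N) k) : Matrix (Fin N) (Fin N) k) ∈ JJ k N 0 :=
    JJ.of_brl.2 ((brl k N).inv_mem (JJ.unip hg))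
  have h2 := (JJ k N (0 + i)).neg_mem (JJ.mul h1 hg)
  rw [zero_add, mul_sub, mul_one, ← Units.val_mul, inv_mul_cancel, Units.val_one, neg_sub] at h2
  exact h2

lemma JJ.unip_mul {g h : GL (Fin N) k} {i : ℕ}
    (hg : (g : Matrix (Fin N) (Fin N) k) - 1 ∈ JJ k N i)
    (hh : (h : Matrix (Fin N) (Fin N) k) - 1 ∈ JJ k N i) :
    ((g * h : GL (Fin N) k) : Matrix (Fin N) (Fin N) k) - 1 ∈ JJ k N i := by
  have h1 := JJ.mul (JJ.of_brl.2 (JJ.unip hg)) hh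
  rw [zero_add] at h1
  have := (JJ k N i).add_mem h1 hg
  rw [Units.val_mul]
  convert this using 1
  noncomm_ring

lemma JJ.cong_mul {g h : GL (Fin N) k} {i : ℕ} (hi : 1 ≤ i)
    (hg : (g : Matrix (Fin N) (Fin N) k) - 1 ∈ JJ k N i)
    (hh : (h : Matrix (Fin N) (Fin N) k) - 1 ∈ JJ k N i) :
    ((g * h : GL (Fin N) k) : Matrix (Fin N) (Fin N) k) - 1 -
      (((g : Matrix (Fin N) (Fin N) k) - 1) + ((h : Matrix (Fin N) (Fin N) k) - 1))
      ∈ JJ k N (i + 1) := by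
  have h1 := JJ.mono (show i + 1 ≤ i + i by omega) (JJ.mul hg hh)
  rw [Units.val_mul]
  convert h1 using 1
  noncomm_ring

lemma JJ.conj {a : GL (Fin N) k} (ha : a ∈ brl k N) {x : Matrix (Fin N) (Fin N) k} {i : ℕ}
    (hx : x ∈ JJ k N i) : (a : Matrix (Fin N) (Fin N) k) * x *
      ((a⁻¹ : GL (Fin N) k) : Matrix (Fin N) (Fin N) k) ∈ JJ k N i := by
  have := JJ.mul (JJ.mul (JJ.of_brl.2 ha) hx) (JJ.of_brl.2 ((brl k N).inv_mem ha))
  simpa using this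

lemma conj_sub_one (a g : GL (Fin N) k) :
    ((a * g * a⁻¹ : GL (Fin N) k) : Matrix (Fin N) (Fin N) k) - 1 =
    (a : Matrix (Fin N) (Fin N) k) * ((g : Matrix (Fin N) (Fin N) k) - 1) *
      ((a⁻¹ : GL (Fin N) k) : Matrix (Fin N) (Fin N) k) := by
  rw [mul_sub, sub_mul, mul_one, ← Units.val_mul, ← Units.val_mul, ← Units.val_mul,
    mul_inv_cancel, Units.val_one]

lemma pow_cong {v : GL (Fin N) k} {i : ℕ} (hi : 1 ≤ i)
    (hv : (v : Matrix (Fin N) (Fin N) k) - 1 ∈ JJ k N i) (r : ℕ) :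
    ((v ^ r : GL (Fin N) k) : Matrix (Fin N) (Fin N) k) - 1 ∈ JJ k N i ∧
    ((v ^ r : GL (Fin N) k) : Matrix (Fin N) (Fin N) k) - 1 -
      (r : k) • ((v : Matrix (Fin N) (Fin N) k) - 1) ∈ JJ k N (i + 1) := by
  induction r with
  | zero => simp [Submodule.zero_mem]
  | succ r ih =>
    rw [pow_succ]
    refine ⟨JJ.unip_mul ih.1 hv, ?_⟩
    have := (JJ k N (i+1)).add_mem (JJ.cong_mul hi ih.1 hv) ih.2
    convert this using 1
    push_cast
    rw [add_smul, one_smul]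
    abel

lemma root_char_zero [CharZero k] (H : Subgroup (GL (Fin N) k))
    (hH : IsClosed (H : Set (GL (Fin N) k))) {v : GL (Fin N) k} (hvH : v ∈ H) {i : ℕ} (hi : 1 ≤ i)
    (hv : (v : Matrix (Fin N) (Fin N) k) - 1 ∈ JJ k N i) (q : k) :
    ∃ u ∈ H, (u : Matrix (Fin N) (Fin N) k) - 1 -
      q • ((v : Matrix (Fin N) (Fin N) k) - 1) ∈ JJ k N (i + 1) := by
  classical
  let bp : ℕ → Polynomial k := fun j => Polynomial.C ((j.factorial : k)⁻¹) * descPochhammer k j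
  have hbp : ∀ j m : ℕ, (bp j).eval (m : k) = (m.choose j : k) := by
    intro j m
    simp only [bp, Polynomial.eval_mul, Polynomial.eval_C,
      descPochhammer_eval_eq_descFactorial, Nat.descFactorial_eq_factorial_mul_choose]
    have : (j.factorial : k) ≠ 0 := by exact_mod_cast j.factorial_ne_zero
    push_cast
    field_simp
  let Pm : GL (Fin N) k → Fin N → Fin N → Polynomial k := fun w a b =>
    ∑ j ∈ Finset.range (N + 2), bp j *
      Polynomial.C ((((w : Matrix (Fin N) (Fin N) k) - 1) ^ j) a b)
  have hPm : ∀ w : GL (Fin N) k, (w : Matrix (Fin N) (Fin N) k) - 1 ∈ JJ k N i →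
      ∀ (m : ℕ) a b, (Pm w a b).eval (m : k) = ((w ^ m : GL (Fin N) k) : Matrix (Fin N) (Fin N) k) a b := by
    intro w hw m a b
    have e : ((w ^ m : GL (Fin N) k) : Matrix (Fin N) (Fin N) k) =
        ∑ j ∈ Finset.range (N + 2), (m.choose j : k) • ((w : Matrix (Fin N) (Fin N) k) - 1) ^ j := by
      have h1 : (w : Matrix (Fin N) (Fin N) k) = ((w : Matrix (Fin N) (Fin N) k) - 1) + 1 := by abel
      rw [Units.val_pow_eq_pow_val, h1, (Commute.one_right _).add_pow]
      simp only [add_sub_cancel_right, one_pow, mul_one]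
      have h2 : ∀ M, m + 1 ≤ M → N + 2 ≤ M → ∑ j ∈ Finset.range (m + 1),
          ((w : Matrix (Fin N) (Fin N) k) - 1) ^ j * (m.choose j : Matrix (Fin N) (Fin N) k) =
          ∑ j ∈ Finset.range (N + 2), (m.choose j : k) • ((w : Matrix (Fin N) (Fin N) k) - 1) ^ j := by
        intro M hM1 hM2
        have h3 : ∀ j, ((w : Matrix (Fin N) (Fin N) k) - 1) ^ j *
            (m.choose j : Matrix (Fin N) (Fin N) k) =
            (m.choose j : k) • ((w : Matrix (Fin N) (Fin N) k) - 1) ^ j := by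
          intro j
          rw [Nat.cast_smul_eq_nsmul, nsmul_eq_mul, (Nat.cast_commute _ _).eq]
        simp only [h3]
        rw [Finset.sum_subset (Finset.range_mono hM1), Finset.sum_subset (Finset.range_mono hM2)]
        · intro j _ hj
          rw [JJ.eq_zero (x := ((w : Matrix (Fin N) (Fin N) k) - 1) ^ j) ?_ (JJ.pow hw j), smul_zero]
          simp only [Finset.mem_range, not_lt] at hj
          nlinarith
        · intro j _ hj
          simp only [Finset.mem_range, not_lt] at hj
          rw [Nat.choose_eq_zero_of_lt (by omega)]; simp
      exact h2 (max (m + 1) (N + 2)) (le_max_left _ _) (le_max_right _ _)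
    rw [e, Matrix.sum_apply, Polynomial.eval_finset_sum]
    refine Finset.sum_congr rfl fun j _ => ?_
    rw [Polynomial.eval_mul, Polynomial.eval_C, hbp, Matrix.smul_apply, smul_eq_mul]
  let G : ((Fin N × Fin N) ⊕ (Fin N × Fin N)) → Polynomial k :=
    Sum.elim (fun p => Pm v p.1 p.2) (fun p => Pm v⁻¹ p.1 p.2)
  have hG : ∀ m : ℕ, glCoords k N (v ^ m) = fun q => (G q).eval (m : k) := by
    intro m
    funext q
    rcases q with ⟨a, b⟩ | ⟨a, b⟩
    · exact (hPm v hv m a b).symm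
    · have := (hPm v⁻¹ (JJ.unip_inv hv) m a b).symm
      simpa [glCoords, G, ← _root_.inv_pow] using this
  obtain ⟨u, hu, huc⟩ := coords_of_vanish hH (fun r => (G r).eval q) (by
    intro f hf
    have hev : ∀ s : k, (MvPolynomial.aeval G f).eval s =
        MvPolynomial.eval (fun q => (G q).eval s) f := by
      intro s
      have := MvPolynomial.map_aeval G (Polynomial.evalRingHom s) f
      simp only [Polynomial.coe_evalRingHom] at this
      rw [this]
      have h2 : (Polynomial.evalRingHom s).comp (algebraMap k (Polynomial k)) = RingHom.id k := by
        ext x; simp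
      rw [h2]; rfl
    have h0 : MvPolynomial.aeval G f = 0 := by
      have hinf : Set.Infinite (Set.range (Nat.cast : ℕ → k)) :=
        Set.infinite_range_of_injective Nat.cast_injective
      refine Polynomial.eq_zero_of_infinite_isRoot _ (hinf.mono ?_)
      rintro _ ⟨m, rfl⟩
      show Polynomial.eval _ _ = 0
      rw [hev, ← hG]
      exact hf _ (H.pow_mem hvH m)
    rw [← hev, h0, Polynomial.eval_zero])
  refine ⟨u, hu, ?_⟩
  have hum : (u : Matrix (Fin N) (Fin N) k) =
      ∑ j ∈ Finset.range (N + 2), (bp j).eval q • ((v : Matrix (Fin N) (Fin N) k) - 1) ^ j := by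
    ext a b
    have := congrFun huc (Sum.inl (a, b))
    rw [Matrix.sum_apply]
    refine this.trans ?_
    simp only [G, Sum.elim_inl, Pm, Polynomial.eval_finset_sum, Polynomial.eval_mul,
      Polynomial.eval_C, Matrix.smul_apply, smul_eq_mul]
  have hb0 : (bp 0).eval q = 1 := by simp [bp]
  have hb1 : (bp 1).eval q = q := by simp [bp]
  rw [hum, Finset.sum_range_succ', Finset.sum_range_succ', hb0, hb1]
  simp only [zero_add, pow_one, pow_zero, one_smul]
  rw [add_sub_cancel_right, add_sub_cancel_right]
  refine Submodule.sum_mem _ fun j _ => Submodule.smul_mem _ _ ?_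
  refine JJ.mono ?_ (JJ.pow hv _)
  nlinarith

lemma root_exists (H : Subgroup (GL (Fin N) k))
    (hH : IsClosed (H : Set (GL (Fin N) k))) {v : GL (Fin N) k} (hvH : v ∈ H) {i : ℕ} (hi : 1 ≤ i)
    (hv : (v : Matrix (Fin N) (Fin N) k) - 1 ∈ JJ k N i) (n : ℕ) (hn : (n : k) ≠ 0) :
    ∃ u ∈ H, (u : Matrix (Fin N) (Fin N) k) - 1 -
      (n : k)⁻¹ • ((v : Matrix (Fin N) (Fin N) k) - 1) ∈ JJ k N (i + 1) := by
  obtain ⟨p, hp⟩ := CharP.exists k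
  rcases CharP.char_is_prime_or_zero k p with hpp | rfl
  · have : Fact p.Prime := ⟨hpp⟩
    let r : ℕ := ((n : ZMod p)⁻¹).val
    have hr : (r : k) = (n : k)⁻¹ := by
      have h1 : (n : ZMod p) ≠ 0 := by
        intro h
        rw [ZMod.natCast_eq_zero_iff] at h
        exact hn ((CharP.cast_eq_zero_iff k p n).2 h)
      have h2 : (r : ZMod p) * (n : ZMod p) = 1 := by
        simp only [r, ZMod.natCast_val, ZMod.cast_id', id_eq]
        exact inv_mul_cancel₀ h1
      have h3 := congrArg (ZMod.castHom (dvd_refl p) k) h2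
      simp only [map_mul, map_natCast, map_one] at h3
      exact eq_inv_of_mul_eq_one_left h3
    exact ⟨v ^ r, H.pow_mem hvH r, by rw [← hr]; exact (pow_cong hi hv r).2⟩
  · have : CharZero k := CharP.charP_to_charZero k
    exact root_char_zero H hH hvH hi hv _

lemma sz_step (H : Subgroup (GL (Fin N) k)) (hH : IsClosed (H : Set (GL (Fin N) k)))
    {a : GL (Fin N) k} (ha : IsDiag k N a) (hnorm : ∀ h ∈ H, a * h * a⁻¹ ∈ H)
    (n : ℕ) (hn : (n : k) ≠ 0) (han : a ^ n = 1) {c : GL (Fin N) k} (hcn : c ^ n = 1)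
    (hc : c * a⁻¹ ∈ H) {i : ℕ} (hi : 1 ≤ i)
    (hci : ((c * a⁻¹ : GL (Fin N) k) : Matrix (Fin N) (Fin N) k) - 1 ∈ JJ k N i) :
    ∃ u ∈ H, (u : Matrix (Fin N) (Fin N) k) - 1 ∈ JJ k N i ∧
      ((u⁻¹ * c * u * a⁻¹ : GL (Fin N) k) : Matrix (Fin N) (Fin N) k) - 1 ∈ JJ k N (i + 1) := by
  have hab : a ∈ brl k N := diag_mem_brl ha
  let p : ℕ → GL (Fin N) k := fun j => c ^ j * (a ^ j)⁻¹
  let X : ℕ → Matrix (Fin N) (Fin N) k := fun j => (p j : Matrix (Fin N) (Fin N) k) - 1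
  let α : Matrix (Fin N) (Fin N) k → Matrix (Fin N) (Fin N) k := fun x =>
    (a : Matrix (Fin N) (Fin N) k) * x * ((a⁻¹ : GL (Fin N) k) : Matrix (Fin N) (Fin N) k)
  set x : Matrix (Fin N) (Fin N) k := ((c * a⁻¹ : GL (Fin N) k) : Matrix (Fin N) (Fin N) k) - 1
  have hps : ∀ j, p (j + 1) = (c * a⁻¹) * (a * p j * a⁻¹) := by
    intro j
    simp only [p, pow_succ', _root_.mul_inv_rev]
    rw [← _root_.mul_inv_rev a (a ^ j), (Commute.self_pow a j).eq, _root_.mul_inv_rev]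
    group
  have hpH : ∀ j, p j ∈ H ∧ X j ∈ JJ k N i := by
    intro j
    induction j with
    | zero => simp [p, X, H.one_mem]
    | succ j ih =>
      refine ⟨by rw [hps]; exact H.mul_mem hc (hnorm _ ih.1), ?_⟩
      simp only [X]
      rw [hps]
      refine JJ.unip_mul hci ?_
      rw [conj_sub_one]
      exact JJ.conj hab ih.2
  have hXs : ∀ j, X (j + 1) - (x + α (X j)) ∈ JJ k N (i + 1) := by
    intro j
    have h1 : ((a * p j * a⁻¹ : GL (Fin N) k) : Matrix (Fin N) (Fin N) k) - 1 ∈ JJ k N i := by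
      rw [conj_sub_one]; exact JJ.conj hab (hpH j).2
    have := JJ.cong_mul hi hci h1
    rw [← hps, conj_sub_one] at this
    exact this
  have hX0 : X 0 = 0 := by simp [X, p]
  have hXn : X n = 0 := by
    have : p n = 1 := by simp only [p]; rw [hcn, han]; group
    simp only [X]; rw [this, Units.val_one, sub_self]
  have hprod : ∀ M : ℕ, ∃ v ∈ H, (v : Matrix (Fin N) (Fin N) k) - 1 ∈ JJ k N i ∧
      (v : Matrix (Fin N) (Fin N) k) - 1 - ∑ j ∈ Finset.range M, X j ∈ JJ k N (i + 1) := by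
    intro M
    induction M with
    | zero => exact ⟨1, H.one_mem, by simp, by simp⟩
    | succ M ih =>
      obtain ⟨v, hv, hv1, hv2⟩ := ih
      refine ⟨v * p M, H.mul_mem hv (hpH M).1, JJ.unip_mul hv1 (hpH M).2, ?_⟩
      have := (JJ k N (i + 1)).add_mem (JJ.cong_mul hi hv1 (hpH M).2) hv2
      rw [Finset.sum_range_succ]
      convert this using 1
      simp only [X]
      abel
  obtain ⟨v, hvH, hv1, hv2⟩ := hprod n
  set S := ∑ j ∈ Finset.range n, X j with hS
  have hSi : S ∈ JJ k N i := Submodule.sum_mem _ fun j _ => (hpH j).2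
  have hαS : α S - S + (n : k) • x ∈ JJ k N (i + 1) := by
    have h1 : ∑ j ∈ Finset.range n, (X (j + 1) - (x + α (X j))) ∈ JJ k N (i + 1) :=
      Submodule.sum_mem _ fun j _ => hXs j
    have h2 : ∑ j ∈ Finset.range n, X (j + 1) = S := by
      have e1 := Finset.sum_range_succ X n
      have e2 := Finset.sum_range_succ' X n
      rw [hXn, add_zero] at e1
      rw [hX0, add_zero] at e2
      rw [← e2, e1]
    have h3 : α S = ∑ j ∈ Finset.range n, α (X j) := by
      simp only [α, hS, Finset.mul_sum, Finset.sum_mul]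
    rw [Finset.sum_sub_distrib, Finset.sum_add_distrib, h2, ← h3, Finset.sum_const,
      Finset.card_range] at h1
    have := (JJ k N (i + 1)).neg_mem h1
    convert this using 1
    rw [Nat.cast_smul_eq_nsmul]
    abel
  obtain ⟨u, huH, hu⟩ := root_exists H hH hvH hi hv1 n hn
  have hu2 : (u : Matrix (Fin N) (Fin N) k) - 1 - (n : k)⁻¹ • S ∈ JJ k N (i + 1) := by
    have := (JJ k N (i + 1)).add_mem hu ((JJ k N (i + 1)).smul_mem (n : k)⁻¹ hv2)
    convert this using 1
    rw [smul_sub (n : k)⁻¹ ((v : Matrix (Fin N) (Fin N) k) - 1) S]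
    abel
  have hu1 : (u : Matrix (Fin N) (Fin N) k) - 1 ∈ JJ k N i := by
    have := (JJ k N i).add_mem (JJ.mono (Nat.le_succ i) hu2)
      ((JJ k N i).smul_mem (n : k)⁻¹ hSi)
    rwa [sub_add_cancel] at this
  refine ⟨u, huH, hu1, ?_⟩
  have e : u⁻¹ * c * u * a⁻¹ = u⁻¹ * ((c * a⁻¹) * (a * u * a⁻¹)) := by group
  have hαu : ((a * u * a⁻¹ : GL (Fin N) k) : Matrix (Fin N) (Fin N) k) - 1 ∈ JJ k N i := by
    rw [conj_sub_one]; exact JJ.conj hab hu1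
  have h1 := JJ.cong_mul hi hci hαu
  have h2 := JJ.cong_mul hi (JJ.unip_inv hu1) (JJ.unip_mul hci hαu)
  have h3 := JJ.cong_mul hi (JJ.unip_inv hu1) hu1
  rw [inv_mul_cancel, Units.val_one, sub_self] at h3
  have h4 : α ((u : Matrix (Fin N) (Fin N) k) - 1 - (n : k)⁻¹ • S) ∈ JJ k N (i + 1) :=
    JJ.conj hab hu2
  have h5 := (JJ k N (i + 1)).smul_mem (n : k)⁻¹ hαS
  have h6 : (n : k)⁻¹ • (α S - S + (n : k) • x) = (n : k)⁻¹ • α S - (n : k)⁻¹ • S + x := by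
    rw [smul_add, smul_sub, smul_smul, inv_mul_cancel₀ hn, one_smul]
  have h7 : α ((u : Matrix (Fin N) (Fin N) k) - 1 - (n : k)⁻¹ • S) =
      α ((u : Matrix (Fin N) (Fin N) k) - 1) - (n : k)⁻¹ • α S := by
    simp only [α]
    rw [mul_sub (a : Matrix (Fin N) (Fin N) k), sub_mul, Matrix.mul_smul, Matrix.smul_mul]
  rw [h6] at h5
  rw [h7] at h4
  rw [e]
  rw [conj_sub_one] at h1
  have := (JJ k N (i + 1)).sub_mem ((JJ k N (i + 1)).add_mem ((JJ k N (i + 1)).add_mem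
    ((JJ k N (i + 1)).sub_mem ((JJ k N (i + 1)).add_mem h1 h2) h3) h4) h5) hu2
  convert this using 1
  simp only [α, x]
  abel

lemma sz_iter (H : Subgroup (GL (Fin N) k)) (hH : IsClosed (H : Set (GL (Fin N) k)))
    {a : GL (Fin N) k} (ha : IsDiag k N a) (hnorm : ∀ h ∈ H, a * h * a⁻¹ ∈ H)
    (n : ℕ) (hn : (n : k) ≠ 0) (han : a ^ n = 1) {c : GL (Fin N) k} (hcn : c ^ n = 1)
    (hc : c * a⁻¹ ∈ H)
    (hci : ((c * a⁻¹ : GL (Fin N) k) : Matrix (Fin N) (Fin N) k) - 1 ∈ JJ k N 1) (i : ℕ) :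
    ∃ u ∈ H, (u : Matrix (Fin N) (Fin N) k) - 1 ∈ JJ k N 1 ∧
      ((u⁻¹ * c * u * a⁻¹ : GL (Fin N) k) : Matrix (Fin N) (Fin N) k) - 1 ∈ JJ k N (i + 1) := by
  induction i with
  | zero => exact ⟨1, H.one_mem, by simp, by simpa using hci⟩
  | succ i ih =>
    obtain ⟨u, huH, hu1, hu2⟩ := ih
    have e : u⁻¹ * c * u * a⁻¹ = u⁻¹ * ((c * a⁻¹) * (a * u * a⁻¹)) := by group
    obtain ⟨w, hwH, hw1, hw2⟩ := sz_step H hH ha hnorm n hn han (c := u⁻¹ * c * u)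
      (by
        have := conj_pow (i := n) (a := u⁻¹) (b := c)
        rw [inv_inv] at this
        rw [this, hcn]; group)
      (by rw [e]; exact H.mul_mem (H.inv_mem huH) (H.mul_mem hc (hnorm _ huH)))
      (Nat.le_add_left 1 i) hu2
    refine ⟨u * w, H.mul_mem huH hwH, JJ.unip_mul hu1 (JJ.mono (by omega) hw1), ?_⟩
    have e2 : (u * w)⁻¹ * c * (u * w) * a⁻¹ = w⁻¹ * (u⁻¹ * c * u) * w * a⁻¹ := by group
    rw [e2]; exact hw2

lemma sz (H : Subgroup (GL (Fin N) k)) (hH : IsClosed (H : Set (GL (Fin N) k)))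
    {a : GL (Fin N) k} (ha : IsDiag k N a) (hnorm : ∀ h ∈ H, a * h * a⁻¹ ∈ H)
    (n : ℕ) (hn : (n : k) ≠ 0) (han : a ^ n = 1) {t : GL (Fin N) k} (ht : t ∈ H)
    (htb : t ∈ brl k N) :
    ∃ u ∈ H, (u : Matrix (Fin N) (Fin N) k) - 1 ∈ JJ k N 1 ∧ (u⁻¹ * t) * a = a * (u⁻¹ * t) := by
  have hab : a ∈ brl k N := diag_mem_brl ha
  obtain ⟨u, huH, hu1, hu2⟩ := sz_iter H hH ha hnorm n hn han (c := t * a * t⁻¹)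
    (by rw [conj_pow, han]; group)
    (by
      have e : t * a * t⁻¹ * a⁻¹ = t * (a * t⁻¹ * a⁻¹) := by group
      rw [e]; exact H.mul_mem ht (hnorm _ (H.inv_mem ht)))
    (by
      have h1 : (t : Matrix (Fin N) (Fin N) k) * a - a * t ∈ JJ k N 1 := by
        have ham : (a : Matrix (Fin N) (Fin N) k) =
            Matrix.diagonal fun i => (a : Matrix (Fin N) (Fin N) k) i i := by
          ext i j
          by_cases h : i = j
          · subst h; rw [Matrix.diagonal_apply_eq]
          · rw [Matrix.diagonal_apply_ne _ h, ha i j h]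
        rw [ham]
        intro j l hl
        rw [Matrix.sub_apply, Matrix.mul_diagonal, Matrix.diagonal_mul]
        rcases (show (l : ℕ) ≤ j by omega).lt_or_eq with h | h
        · rw [(mem_brl t).1 htb j l h]; simp
        · have : l = j := Fin.ext h
          rw [this]; ring
      have h2 := JJ.mul h1 (JJ.of_brl.2 ((brl k N).inv_mem ((brl k N).mul_mem hab htb)))
      rw [add_zero, sub_mul, ← Units.val_mul, ← Units.val_mul, ← Units.val_mul, ← Units.val_mul,
        mul_inv_cancel, Units.val_one] at h2
      have e : t * a * t⁻¹ * a⁻¹ = t * a * (a * t)⁻¹ := by group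
      rw [e]; exact h2) N
  refine ⟨u, huH, hu1, ?_⟩
  have h0 := JJ.eq_zero (Nat.le_succ N) hu2
  have h1 : u⁻¹ * (t * a * t⁻¹) * u * a⁻¹ = 1 := Units.ext (by rw [Units.val_one]; exact sub_eq_zero.1 h0)
  have h2 := mul_inv_eq_one.1 h1
  calc u⁻¹ * t * a = (u⁻¹ * (t * a * t⁻¹) * u) * (u⁻¹ * t) := by group
    _ = _ := by rw [h2]

lemma finite_cosets_aux {ι : Type*} (S : Set (GL (Fin N) k)) (T : Subgroup (GL (Fin N) k))
    (E : Set ι) (hE : E.Finite) (P : GL (Fin N) k → ι → Prop) (h1 : ∀ x ∈ S, ∃ e ∈ E, P x e)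
    (h2 : ∀ x ∈ S, ∀ x' ∈ S, ∀ e, P x e → P x' e → x⁻¹ * x' ∈ T) :
    ∃ R : Set (GL (Fin N) k), R.Finite ∧ ∀ x ∈ S, ∃ r ∈ R, r⁻¹ * x ∈ T := by
  classical
  let f : ι → GL (Fin N) k := fun e => if h : ∃ x ∈ S, P x e then h.choose else 1
  refine ⟨f '' E, hE.image f, fun x hx => ?_⟩
  obtain ⟨e, he, hP⟩ := h1 x hx
  have hex : ∃ x ∈ S, P x e := ⟨x, hx, hP⟩
  refine ⟨f e, ⟨e, he, rfl⟩, ?_⟩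
  have hf : f e = hex.choose := dif_pos hex
  rw [hf]
  exact h2 _ hex.choose_spec.1 x hx e hex.choose_spec.2 hP

lemma finite_cosets (F T : Subgroup (GL (Fin N) k))
    (hF : ∀ S : Set (GL (Fin N) k), S ⊆ F → IsPreconnected S → 1 ∈ S → S ⊆ T) :
    ∃ R : Set (GL (Fin N) k), R.Finite ∧ ∀ x ∈ F, ∃ r ∈ R, r⁻¹ * x ∈ T := by
  have hN : TopologicalSpace.NoetherianSpace (F : Set (GL (Fin N) k)) :=
    Topology.IsInducing.subtypeVal.noetherianSpace
  refine finite_cosets_aux (F : Set (GL (Fin N) k)) T (irreducibleComponents (F : Set (GL (Fin N) k)))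
    TopologicalSpace.NoetherianSpace.finite_irreducibleComponents
    (fun x e => ∃ h : x ∈ (F : Set (GL (Fin N) k)), irreducibleComponent (⟨x, h⟩ : (F : Set (GL (Fin N) k))) = e)
    (fun x hx => ⟨_, irreducibleComponent_mem_irreducibleComponents ⟨x, hx⟩, hx, rfl⟩) ?_
  rintro x hx x' hx' e ⟨_, rfl⟩ ⟨_, he⟩
  let Z : Set (GL (Fin N) k) := Subtype.val '' irreducibleComponent (⟨x, hx⟩ : (F : Set (GL (Fin N) k)))
  have hZ : IsPreconnected Z :=
    (isIrreducible_irreducibleComponent.isConnected.isPreconnected).image _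
      continuous_subtype_val.continuousOn
  have hZx : x ∈ Z := ⟨_, mem_irreducibleComponent, rfl⟩
  have hZx' : x' ∈ Z := ⟨⟨x', hx'⟩, by rw [← he]; exact mem_irreducibleComponent, rfl⟩
  have := hF ((fun g => x⁻¹ * g * 1) '' Z) (by
      rintro _ ⟨z, ⟨z, _, rfl⟩, rfl⟩
      exact F.mul_mem (F.mul_mem (F.inv_mem hx) z.2) F.one_mem)
    (hZ.image _ (continuous_mul_mul x⁻¹ 1).continuousOn) ⟨x, hZx, by simp⟩ ⟨x', hZx', rfl⟩
  simpa using this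

lemma le_of_finite_cosets (T T' : Subgroup (GL (Fin N) k)) (hT : IsClosed (T : Set (GL (Fin N) k)))
    (hT' : IsPreconnected (T' : Set (GL (Fin N) k))) (R : Set (GL (Fin N) k)) (hR : R.Finite)
    (h : ∀ x ∈ T', ∃ r ∈ R, r⁻¹ * x ∈ T) : T' ≤ T := by
  intro t ht
  by_contra htT
  let K : Set (GL (Fin N) k) := ⋃ r ∈ R \ (T : Set (GL (Fin N) k)), (fun g => r⁻¹ * g * 1) ⁻¹' T
  have hK : IsClosed K := (hR.subset Set.diff_subset).isClosed_biUnion fun r _ =>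
    hT.preimage (continuous_mul_mul r⁻¹ 1)
  have hcov : ∀ x ∈ T', x ∉ T → x ∈ K := by
    intro x hx hxT
    obtain ⟨r, hr, hrx⟩ := h x hx
    refine Set.mem_biUnion (x := r) ⟨hr, fun hrT => hxT ?_⟩ (by simpa using hrx)
    have := T.mul_mem hrT hrx
    simpa using this
  obtain ⟨x, hx, hxT, hxK⟩ := isPreconnected_closed_iff.1 hT' _ _ hT hK
    (fun x hx => by
      by_cases hxT : x ∈ T
      · exact Or.inl hxT
      · exact Or.inr (hcov x hx hxT))
    ⟨1, T'.one_mem, T.one_mem⟩ ⟨t, ht, hcov t ht htT⟩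
  simp only [K, Set.mem_iUnion] at hxK
  obtain ⟨r, ⟨_, hr⟩, hrx⟩ := hxK
  apply hr
  have h1 : r⁻¹ * x * 1 ∈ T := hrx
  have := T.mul_mem hxT (T.inv_mem h1)
  simpa using this

lemma eq_diagonal {a : GL (Fin N) k} (ha : IsDiag k N a) : (a : Matrix (Fin N) (Fin N) k) =
    Matrix.diagonal fun i => (a : Matrix (Fin N) (Fin N) k) i i := by
  ext i j
  by_cases h : i = j
  · subst h; rw [Matrix.diagonal_apply_eq]
  · rw [Matrix.diagonal_apply_ne _ h, ha i j h]

lemma diag_comm {a b : GL (Fin N) k} (ha : IsDiag k N a) (hb : IsDiag k N b) : a * b = b * a := by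
  apply Units.ext
  rw [Units.val_mul, Units.val_mul, eq_diagonal ha, eq_diagonal hb, Matrix.diagonal_mul_diagonal,
    Matrix.diagonal_mul_diagonal]
  congr 1
  funext i
  ring

lemma torus_comm {T : Subgroup (GL (Fin N) k)} (hT : IsTorus k N T) {s t : GL (Fin N) k}
    (hs : s ∈ T) (ht : t ∈ T) : s * t = t * s := by
  obtain ⟨_, _, c, hc⟩ := hT
  have := diag_comm (hc s hs) (hc t ht)
  have e : ∀ x y : GL (Fin N) k, c * x * c⁻¹ * (c * y * c⁻¹) = c * (x * y) * c⁻¹ := by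
    intro x y; group
  rw [e, e] at this
  exact mul_left_cancel (mul_right_cancel this)

lemma torsion_elt (A : Subgroup (GL (Fin N) k)) (hcl : IsClosed (A : Set (GL (Fin N) k)))
    (hconn : IsPreconnected (A : Set (GL (Fin N) k))) (hdiag : ∀ a ∈ A, IsDiag k N a) :
    ∃ a ∈ A, ∃ n : ℕ, (n : k) ≠ 0 ∧ a ^ n = 1 ∧
      ∀ g : GL (Fin N) k, g * a = a * g → ∀ b ∈ A, g * b = b * g := by
  classical
  obtain ⟨m, hm1, hm2⟩ := torus_weights A hcl hconn hdiag
  obtain ⟨p, hp, hpp⟩ := Nat.exists_infinite_primes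
    ((∑ i, ∑ j, (m i - m j).natAbs) + ringChar k + 1)
  have hpk : (p : k) ≠ 0 := by
    intro h
    have h1 := (ringChar.spec k p).1 h
    rcases (Nat.dvd_prime hpp).1 h1 with h2 | h2
    · exact CharP.ringChar_ne_one h2
    · omega
  have : NeZero (p : k) := ⟨hpk⟩
  obtain ⟨ζ, hζ⟩ := HasEnoughRootsOfUnity.exists_primitiveRoot k p
  have hζ0 : ζ ≠ 0 := hζ.ne_zero hpp.ne_zero
  let z : kˣ := Units.mk0 ζ hζ0
  have hz : IsPrimitiveRoot z p := IsPrimitiveRoot.coe_units_iff.1 hζ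
  obtain ⟨a, ha, hai⟩ := hm2 z
  have ham := eq_diagonal (hdiag a ha)
  have key : ∀ i j, (a : Matrix (Fin N) (Fin N) k) i i = a j j → m i = m j := by
    intro i j h
    rw [hai, hai, Units.val_inj] at h
    have h1 : z ^ (m i - m j) = 1 := by rw [_root_.zpow_sub, h, mul_inv_cancel]
    have h2 := (hz.zpow_eq_one_iff_dvd _).1 h1
    have h3 : (m i - m j).natAbs < p := by
      have h4 : (m i - m j).natAbs ≤ ∑ j, (m i - m j).natAbs :=
        Finset.single_le_sum (f := fun j => (m i - m j).natAbs) (fun _ _ => Nat.zero_le _)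
          (Finset.mem_univ j)
      have h5 : ∑ j, (m i - m j).natAbs ≤ ∑ i, ∑ j, (m i - m j).natAbs :=
        Finset.single_le_sum (f := fun i => ∑ j, (m i - m j).natAbs) (fun _ _ => Nat.zero_le _)
          (Finset.mem_univ i)
      omega
    have h6 := Int.eq_zero_of_dvd_of_natAbs_lt_natAbs h2 (by simpa using h3)
    omega
  refine ⟨a, ha, p, hpk, ?_, ?_⟩
  · apply Units.ext
    rw [Units.val_pow_eq_pow_val, ham, Matrix.diagonal_pow, Units.val_one, ← Matrix.diagonal_one]
    congr 1
    funext i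
    rw [Pi.pow_apply, hai, ← Units.val_pow_eq_pow_val, ← zpow_natCast, ← _root_.zpow_mul, mul_comm,
      _root_.zpow_mul, zpow_natCast, hz.pow_eq_one, _root_.one_zpow, Units.val_one]
  · intro g hg b hb
    have hbm := eq_diagonal (hdiag b hb)
    have hg' := congrArg (Units.val) hg
    rw [Units.val_mul, Units.val_mul, ham] at hg'
    apply Units.ext
    rw [Units.val_mul, Units.val_mul, hbm]
    ext i j
    have h1 := congrFun (congrFun hg' i) j
    rw [Matrix.mul_diagonal, Matrix.diagonal_mul] at h1 ⊢
    by_cases h0 : (g : Matrix (Fin N) (Fin N) k) i j = 0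
    · rw [h0]; ring
    · rw [mul_comm] at h1
      have h2 := mul_right_cancel₀ h0 h1
      rw [hm1 j i (key _ _ h2) b hb]; ring

lemma unip_diag {v g : GL (Fin N) k} (hv : (v : Matrix (Fin N) (Fin N) k) - 1 ∈ JJ k N 1)
    (hg : IsDiag k N (g * v * g⁻¹)) : v = 1 := by
  have h0 : ((v : Matrix (Fin N) (Fin N) k) - 1) ^ N = 0 := JJ.eq_zero (by omega) (JJ.pow hv N)
  have h1 : ∀ n : ℕ, (((g * v * g⁻¹ : GL (Fin N) k) : Matrix (Fin N) (Fin N) k) - 1) ^ n =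
      (g : Matrix (Fin N) (Fin N) k) * ((v : Matrix (Fin N) (Fin N) k) - 1) ^ n *
      ((g⁻¹ : GL (Fin N) k) : Matrix (Fin N) (Fin N) k) := by
    intro n
    rw [conj_sub_one, Units.conj_pow]
  have h2 := h1 N
  rw [h0, mul_zero, zero_mul, eq_diagonal hg, ← Matrix.diagonal_one, Matrix.diagonal_sub,
    Matrix.diagonal_pow] at h2
  have h3 : g * v * g⁻¹ = 1 := by
    apply Units.ext
    rw [eq_diagonal hg, Units.val_one, ← Matrix.diagonal_one]
    congr 1
    funext i
    have h4 := congrFun (congrFun h2 i) i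
    rw [Matrix.diagonal_apply_eq, Pi.pow_apply, Matrix.zero_apply] at h4
    exact sub_eq_zero.1 (eq_zero_of_pow_eq_zero h4)
  have h5 : v = g⁻¹ * (g * v * g⁻¹) * g := by group
  rw [h5, h3]; group

lemma main_core (H A T : Subgroup (GL (Fin N) k))
    (hH : IsClosed (H : Set (GL (Fin N) k)))
    (hA : IsTorus k N A) (hT : IsTorus k N T)
    (hnorm : ∀ a ∈ A, ∀ h ∈ H, a * h * a⁻¹ ∈ H)
    (hcent : ∀ a ∈ A, ∀ t ∈ T, a * t = t * a)
    (hfix : ∀ S : Set (GL (Fin N) k), (∀ h ∈ S, h ∈ H ∧ (∀ t ∈ T, h * t = t * h) ∧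
      ∀ a ∈ A, h * a = a * h) → IsPreconnected S → 1 ∈ S → S ⊆ T)
    (T' : Subgroup (GL (Fin N) k)) (hT' : IsTorus k N T') (hT'H : T' ≤ H) (hTT' : T ≤ T') :
    T' = T := by
  have hTcl : IsClosed (T : Set (GL (Fin N) k)) := (zClosed_iff _).1 hT.1
  let H1 : Subgroup (GL (Fin N) k) := H ⊓ Subgroup.centralizer (T : Set (GL (Fin N) k))
  have hH1 : ∀ g, g ∈ H1 ↔ g ∈ H ∧ ∀ t ∈ T, g * t = t * g := by
    intro g
    simp only [H1, Subgroup.mem_inf, Subgroup.mem_centralizer_iff, SetLike.mem_coe]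
    exact ⟨fun h => ⟨h.1, fun t ht => (h.2 t ht).symm⟩, fun h => ⟨h.1, fun t ht => (h.2 t ht).symm⟩⟩
  have hH1cl : IsClosed (H1 : Set (GL (Fin N) k)) := by
    have : (H1 : Set (GL (Fin N) k)) = (H : Set (GL (Fin N) k)) ∩ ⋂ t ∈ T, {g | g * t = t * g} := by
      ext g
      simp only [SetLike.mem_coe, hH1, Set.mem_inter_iff, Set.mem_iInter, Set.mem_setOf_eq]
    rw [this]
    exact hH.inter (isClosed_iInter fun t => isClosed_iInter fun _ => isClosed_comm t)
  have hn1 : ∀ a ∈ A, ∀ h ∈ H1, a * h * a⁻¹ ∈ H1 := by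
    intro a ha h hh
    rw [hH1] at hh ⊢
    refine ⟨hnorm a ha h hh.1, fun t ht => ?_⟩
    have e1 := hcent a ha t ht
    have e2 := hcent a⁻¹ (A.inv_mem ha) t ht
    rw [mul_assoc, e2, mul_assoc, ← mul_assoc h t, hh.2 t ht, ← mul_assoc, ← mul_assoc, e1]
    group
  have hT'H1 : T' ≤ H1 := fun t' ht' => (hH1 t').2 ⟨hT'H ht', fun t ht => torus_comm hT' ht' (hTT' ht)⟩
  obtain ⟨Y, hYcl, hYne, hYA, hYH, hYt⟩ := exists_trans H1 (brl k N) A hH1cl brl_closed hn1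
  obtain ⟨y0, hy0, hy0d⟩ := fixed_point A hA Y hYcl hYne hYA
  obtain ⟨y1, hy1, hy1d⟩ := fixed_point T' hT' Y hYcl hYne
    (fun t ht b hb y hy => hYH t (hT'H1 ht) b hb y hy)
  obtain ⟨h, hh, b, hb, rfl⟩ := hYt y0 hy0 (fun a ha => diag_mem_brl (hy0d a ha)) y1 hy1
  -- conjugated groups
  let H2 : Subgroup (GL (Fin N) k) := H1.map (MulAut.conj y0⁻¹).toMonoidHom
  have hH2 : ∀ g, g ∈ H2 ↔ y0 * g * y0⁻¹ ∈ H1 := by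
    intro g
    constructor
    · rintro ⟨x, hx, rfl⟩
      have e : y0 * ((MulAut.conj y0⁻¹).toMonoidHom x) * y0⁻¹ = x := by
        simp [mul_assoc]
      rw [e]; exact hx
    · intro hg
      exact ⟨_, hg, by simp [mul_assoc]⟩
  have hH2cl : IsClosed (H2 : Set (GL (Fin N) k)) := by
    have : (H2 : Set (GL (Fin N) k)) = (fun g => y0 * g * y0⁻¹) ⁻¹' H1 := by
      ext g; exact hH2 g
    rw [this]
    exact hH1cl.preimage (continuous_mul_mul _ _)
  let A2 : Subgroup (GL (Fin N) k) := A.map (MulAut.conj y0⁻¹).toMonoidHom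
  have hA2 : ∀ g, g ∈ A2 ↔ y0 * g * y0⁻¹ ∈ A := by
    intro g
    constructor
    · rintro ⟨x, hx, rfl⟩
      have e : y0 * ((MulAut.conj y0⁻¹).toMonoidHom x) * y0⁻¹ = x := by
        simp [mul_assoc]
      rw [e]; exact hx
    · intro hg
      exact ⟨_, hg, by simp [mul_assoc]⟩
  have hA2cl : IsClosed (A2 : Set (GL (Fin N) k)) := by
    have : (A2 : Set (GL (Fin N) k)) = (fun g => y0 * g * y0⁻¹) ⁻¹' A := by
      ext g; exact hA2 g
    rw [this]
    exact ((zClosed_iff _).1 hA.1).preimage (continuous_mul_mul _ _)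
  have hA2conn : IsPreconnected (A2 : Set (GL (Fin N) k)) := by
    have : (A2 : Set (GL (Fin N) k)) = (fun g => y0⁻¹ * g * y0⁻¹⁻¹) '' A := rfl
    rw [this]
    exact hA.2.1.image _ (continuous_mul_mul _ _).continuousOn
  have hA2d : ∀ a ∈ A2, IsDiag k N a := by
    intro a ha
    have := hy0d _ ((hA2 a).1 ha)
    have e : y0⁻¹ * (y0 * a * y0⁻¹) * y0 = a := by group
    rwa [e] at this
  obtain ⟨a, ha, n, hn, han, hac⟩ := torsion_elt A2 hA2cl hA2conn hA2d
  have hnorm2 : ∀ g ∈ H2, a * g * a⁻¹ ∈ H2 := by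
    intro g hg
    rw [hH2] at hg ⊢
    have := hn1 _ ((hA2 a).1 ha) _ hg
    have e : y0 * a * y0⁻¹ * (y0 * g * y0⁻¹) * (y0 * a * y0⁻¹)⁻¹ = y0 * (a * g * a⁻¹) * y0⁻¹ := by
      group
    rwa [e] at this
  let F : Subgroup (GL (Fin N) k) := H1 ⊓ Subgroup.centralizer (A : Set (GL (Fin N) k))
  have hFm : ∀ g, g ∈ F ↔ g ∈ H1 ∧ ∀ a ∈ A, g * a = a * g := by
    intro g
    simp only [F, Subgroup.mem_inf, Subgroup.mem_centralizer_iff, SetLike.mem_coe]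
    exact ⟨fun h => ⟨h.1, fun t ht => (h.2 t ht).symm⟩, fun h => ⟨h.1, fun t ht => (h.2 t ht).symm⟩⟩
  obtain ⟨E, hE, hEF⟩ := finite_cosets F T (fun S hS hSc h1 => hfix S (fun g hg => by
    have := (hFm g).1 (hS hg)
    exact ⟨((hH1 g).1 this.1).1, ((hH1 g).1 this.1).2, this.2⟩) hSc h1)
  have hhT := ((hH1 h).1 hh).2
  obtain ⟨R, hR, hRc⟩ := finite_cosets_aux (T' : Set (GL (Fin N) k)) T E hE
    (fun t e => ∃ u : GL (Fin N) k, (u : Matrix (Fin N) (Fin N) k) - 1 ∈ JJ k N 1 ∧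
      ∃ s ∈ T, y0 * u⁻¹ * y0⁻¹ * h⁻¹ * t * h = e * s)
    (by
      intro t ht
      have ht2b : y0⁻¹ * h⁻¹ * t * h * y0 ∈ brl k N := by
        have h1 := diag_mem_brl (hy1d t ht)
        have h2 := (brl k N).mul_mem ((brl k N).mul_mem hb h1) ((brl k N).inv_mem hb)
        have e : b * ((h * y0 * b)⁻¹ * t * (h * y0 * b)) * b⁻¹ = y0⁻¹ * h⁻¹ * t * h * y0 := by group
        rwa [e] at h2
      have ht2H : y0⁻¹ * h⁻¹ * t * h * y0 ∈ H2 := by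
        rw [hH2]
        have e : y0 * (y0⁻¹ * h⁻¹ * t * h * y0) * y0⁻¹ = h⁻¹ * t * h := by group
        rw [e]
        exact H1.mul_mem (H1.mul_mem (H1.inv_mem hh) (hT'H1 ht)) hh
      obtain ⟨u, huH, hu1, huc⟩ := sz H2 hH2cl (hA2d a ha) hnorm2 n hn han ht2H ht2b
      have hf : y0 * u⁻¹ * y0⁻¹ * h⁻¹ * t * h ∈ F := by
        have e : y0 * u⁻¹ * y0⁻¹ * h⁻¹ * t * h =
            y0 * (u⁻¹ * (y0⁻¹ * h⁻¹ * t * h * y0)) * y0⁻¹ := by group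
        rw [e, hFm]
        refine ⟨(hH2 _).1 (H2.mul_mem (H2.inv_mem huH) ht2H), fun c hc => ?_⟩
        have hc2 : y0⁻¹ * c * y0 ∈ A2 := by
          rw [hA2]
          have e : y0 * (y0⁻¹ * c * y0) * y0⁻¹ = c := by group
          rwa [e]
        have h3 := hac _ huc _ hc2
        generalize u⁻¹ * (y0⁻¹ * h⁻¹ * t * h * y0) = w at h3 ⊢
        calc y0 * w * y0⁻¹ * c = y0 * (w * (y0⁻¹ * c * y0)) * y0⁻¹ := by group
          _ = y0 * ((y0⁻¹ * c * y0) * w) * y0⁻¹ := by rw [h3]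
          _ = _ := by group
      obtain ⟨e, he, hef⟩ := hEF _ hf
      exact ⟨e, he, u, hu1, _, hef, by group⟩)
    (by
      rintro t ht t' ht' e ⟨u, hu, s, hs, hus⟩ ⟨u', hu', s', hs', hus'⟩
      have hx : t * s⁻¹ * (t' * s'⁻¹)⁻¹ ∈ T' :=
        T'.mul_mem (T'.mul_mem ht (T'.inv_mem (hTT' hs)))
          (T'.inv_mem (T'.mul_mem ht' (T'.inv_mem (hTT' hs'))))
      obtain ⟨_, _, c, hc⟩ := hT'
      have hcx := hc _ hx
      have e1 : h⁻¹ * (t * s⁻¹) * h = y0 * u * y0⁻¹ * e := by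
        have e0 : h⁻¹ * (t * s⁻¹) * h = h⁻¹ * t * h * s⁻¹ := by
          have := hhT s⁻¹ (T.inv_mem hs)
          rw [mul_assoc (h⁻¹ * t) h, this]; group
        rw [e0]
        calc h⁻¹ * t * h * s⁻¹ = y0 * u * y0⁻¹ * (y0 * u⁻¹ * y0⁻¹ * h⁻¹ * t * h) * s⁻¹ := by group
          _ = _ := by rw [hus]; group
      have e2 : h⁻¹ * (t' * s'⁻¹) * h = y0 * u' * y0⁻¹ * e := by
        have e0 : h⁻¹ * (t' * s'⁻¹) * h = h⁻¹ * t' * h * s'⁻¹ := by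
          have := hhT s'⁻¹ (T.inv_mem hs')
          rw [mul_assoc (h⁻¹ * t') h, this]; group
        rw [e0]
        calc h⁻¹ * t' * h * s'⁻¹ = y0 * u' * y0⁻¹ * (y0 * u'⁻¹ * y0⁻¹ * h⁻¹ * t' * h) * s'⁻¹ := by group
          _ = _ := by rw [hus']; group
      have e3 : t * s⁻¹ * (t' * s'⁻¹)⁻¹ = h * y0 * (u * u'⁻¹) * (h * y0)⁻¹ := by
        calc t * s⁻¹ * (t' * s'⁻¹)⁻¹ =
            h * ((h⁻¹ * (t * s⁻¹) * h) * (h⁻¹ * (t' * s'⁻¹) * h)⁻¹) * h⁻¹ := by group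
          _ = _ := by rw [e1, e2]; group
      have e4 : u * u'⁻¹ = 1 := by
        refine unip_diag (g := c * (h * y0)) (JJ.unip_mul hu (JJ.unip_inv hu')) ?_
        have e5 : c * (h * y0) * (u * u'⁻¹) * (c * (h * y0))⁻¹ =
            c * (h * y0 * (u * u'⁻¹) * (h * y0)⁻¹) * c⁻¹ := by group
        rw [e5, ← e3]
        exact hcx
      rw [e4, mul_one, mul_inv_cancel, mul_inv_eq_one] at e3
      have e6 : t⁻¹ * t' = s⁻¹ * s' := by
        have : t' = t * s⁻¹ * s' := by rw [e3]; group
        rw [this]; group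
      rw [e6]
      exact T.mul_mem (T.inv_mem hs) hs')
  exact le_antisymm (le_of_finite_cosets T T' hTcl hT'.2.1 R hR hRc) hTT'

lemma fix_transfer (H A T : Subgroup (GL (Fin N) k))
    (hone : (1 : GL (Fin N) k) ∈ H ∧ ∀ a ∈ A, ∀ t ∈ T, (a * t) * 1 * (a * t)⁻¹ = 1)
    (hfix : Subtype.val '' (@connectedComponent
        {h : GL (Fin N) k // h ∈ H ∧ ∀ a ∈ A, ∀ t ∈ T, (a * t) * h * (a * t)⁻¹ = h}
        (TopologicalSpace.induced Subtype.val (zTop k N))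
        ⟨1, hone⟩) = (T : Set (GL (Fin N) k)))
    (S : Set (GL (Fin N) k)) (hS : ∀ h ∈ S, h ∈ H ∧ (∀ t ∈ T, h * t = t * h) ∧
      ∀ a ∈ A, h * a = a * h) (hc : IsPreconnected S) (h1 : 1 ∈ S) : S ⊆ T := by
  intro g hg
  have hmem : ∀ h ∈ S, h ∈ H ∧ ∀ a ∈ A, ∀ t ∈ T, (a * t) * h * (a * t)⁻¹ = h := by
    intro h hh
    obtain ⟨h1, h2, h3⟩ := hS h hh
    refine ⟨h1, fun a ha t ht => ?_⟩
    rw [mul_inv_eq_iff_eq_mul, mul_assoc, ← h2 t ht, ← mul_assoc, ← h3 a ha, mul_assoc]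
  let P : Set {h : GL (Fin N) k // h ∈ H ∧ ∀ a ∈ A, ∀ t ∈ T, (a * t) * h * (a * t)⁻¹ = h} :=
    Subtype.val ⁻¹' S
  have hP : IsPreconnected P := by
    have hind : Topology.IsInducing (Subtype.val : {h : GL (Fin N) k // h ∈ H ∧
        ∀ a ∈ A, ∀ t ∈ T, (a * t) * h * (a * t)⁻¹ = h} → GL (Fin N) k) := ⟨rfl⟩
    refine hind.isPreconnected_image.1 ?_
    have : Subtype.val '' P = S := by
      ext x
      constructor
      · rintro ⟨x, hx, rfl⟩; exact hx
      · intro hx; exact ⟨⟨x, hmem x hx⟩, hx, rfl⟩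
    rw [this]; exact hc
  rw [← hfix]
  exact ⟨⟨g, hmem g hg⟩, hP.subset_connectedComponent (x := ⟨1, hone⟩) h1 hg, rfl⟩

end helpers

/-- Recognizing maximal tori in the presence of a suitable torus action:
if a torus `A` acts on the linear algebraic group `H` (here: `A` normalizes
`H` inside a common `GL_N`, with `A ∩ H = 1`, forming `A ⋉ H`), `T` is a torus
of `H` centralized by `A`, and the identity component of the fixed point group
`H^{A×T}` of the conjugation action of `A × T` on `H` equals `T`, then `T` is
a maximal torus of `H`. -/
theorem isMaximalTorus_of_fixedPoints
    (H A T : Subgroup (GL (Fin N) k))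
    (hH : ZClosed k N (H : Set (GL (Fin N) k)))
    (hA : IsTorus k N A) (hT : IsTorus k N T) (hTH : T ≤ H)
    (hnorm : ∀ a ∈ A, ∀ h ∈ H, a * h * a⁻¹ ∈ H)
    (hdisj : A ⊓ H = ⊥)
    (hcent : ∀ a ∈ A, ∀ t ∈ T, a * t = t * a)
    (hfix : Subtype.val '' (@connectedComponent
        {h : GL (Fin N) k // h ∈ H ∧ ∀ a ∈ A, ∀ t ∈ T, (a * t) * h * (a * t)⁻¹ = h}
        (TopologicalSpace.induced Subtype.val (zTop k N))
        ⟨1, H.one_mem, fun a _ t _ => by group⟩) = (T : Set (GL (Fin N) k))) :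
    ∀ T' : Subgroup (GL (Fin N) k), IsTorus k N T' → T' ≤ H → T ≤ T' → T' = T := by
  intro T' hT' hT'H hTT'
  exact main_core H A T ((zClosed_iff _).1 hH) hA hT hnorm hcent
    (fix_transfer H A T _ hfix) T' hT' hT'H hTT'
end

section
/- Let 𝔤 be a semisimple complex Lie algebra with Cartan subalgebra 𝔞 and root system R. For α ∈ R, the centralizer in 𝔤 of the 𝔰𝔩₂-triple subalgebra spanned by H_α, 𝔤_α, and 𝔤_{−α} equals {u ∈ 𝔞 : α(u) = 0} ⊕ (⊕_{β ∈ {α}^⊥} 𝔤_β), where {α}^⊥ is the set of roots strongly orthogonal to α. -/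
open LieAlgebra

section Helpers
open LieModule LieAlgebra.IsKilling Module

variable {L : Type*} [LieRing L] [LieAlgebra ℂ L] [FiniteDimensional ℂ L]
    [LieAlgebra.IsKilling ℂ L] {H : LieSubalgebra ℂ L} [H.IsCartanSubalgebra]

/-- The elements commuting with `L_a` and `L_{-a}`, as an `H`-submodule. -/
def centH (H : LieSubalgebra ℂ L) [H.IsCartanSubalgebra] (a : H → ℂ) : LieSubmodule ℂ H L where
  carrier := {x | (∀ y ∈ rootSpace H a, ⁅x, y⁆ = 0) ∧ (∀ y ∈ rootSpace H (-a), ⁅x, y⁆ = 0)}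
  add_mem' {x z} hx hz := ⟨fun y hy => by rw [add_lie, hx.1 y hy, hz.1 y hy, add_zero],
    fun y hy => by rw [add_lie, hx.2 y hy, hz.2 y hy, add_zero]⟩
  zero_mem' := ⟨fun y _ => zero_lie y, fun y _ => zero_lie y⟩
  smul_mem' c x hx := ⟨fun y hy => by rw [smul_lie, hx.1 y hy, smul_zero],
    fun y hy => by rw [smul_lie, hx.2 y hy, smul_zero]⟩
  lie_mem {h x} hx := by
    constructor
    · intro y hy
      have h1 : ⁅(h : L), y⁆ ∈ rootSpace H a := (rootSpace H a).lie_mem (x := h) hy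
      change ⁅⁅(h : L), x⁆, y⁆ = 0
      rw [lie_lie, hx.1 y hy, hx.1 _ h1, lie_zero, sub_zero]
    · intro y hy
      have h1 : ⁅(h : L), y⁆ ∈ rootSpace H (-a) := (rootSpace H (-a)).lie_mem (x := h) hy
      change ⁅⁅(h : L), x⁆, y⁆ = 0
      rw [lie_lie, hx.2 y hy, hx.2 _ h1, lie_zero, sub_zero]

lemma mem_centH {a : H → ℂ} {x : L} : x ∈ centH H a ↔
    (∀ y ∈ rootSpace H a, ⁅x, y⁆ = 0) ∧ (∀ y ∈ rootSpace H (-a), ⁅x, y⁆ = 0) := Iff.rfl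

lemma chain_trivial (A X : Weight ℂ H L) (hA : A.IsNonZero) (hX : X.IsNonZero) {x : L}
    (hx : x ∈ rootSpace H X) (hx0 : x ≠ 0) (hc : x ∈ centH H A) :
    X (coroot A) = 0 ∧ chainTopCoeff A X = 0 ∧ chainBotCoeff A X = 0 := by
  obtain ⟨h, e, f, isSl2, he, hf⟩ := exists_isSl2Triple_of_weight_isNonZero hA
  obtain rfl := isSl2.h_eq_coroot hA he hf
  have hex : ⁅e, x⁆ = 0 := by rw [← lie_skew, hc.1 e he, neg_zero]
  have hfx : ⁅f, x⁆ = 0 := by rw [← lie_skew, hc.2 f hf, neg_zero]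
  have h0 : X (coroot A) = 0 := by
    have h1 := lie_eq_smul_of_mem_rootSpace hx (coroot A)
    rw [LieSubalgebra.coe_bracket_of_module, ← isSl2.lie_e_f, lie_lie, hex, hfx, lie_zero,
      lie_zero, sub_zero] at h1
    exact (smul_eq_zero_iff_left hx0).1 h1.symm
  have hcast := apply_coroot_eq_cast A X
  rw [h0] at hcast
  have hbt : (chainBotCoeff A X : ℤ) = chainTopCoeff A X := by
    have : ((chainBotCoeff A X - chainTopCoeff A X : ℤ) : ℂ) = 0 := hcast.symm
    have := Int.cast_eq_zero.1 this
    lia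
  have hlen := chainBotCoeff_add_chainTopCoeff A X
  have hk : chainTopCoeff A X = 0 := by
    by_contra hk
    obtain ⟨n, hn⟩ := Nat.exists_eq_succ_of_ne_zero hk
    obtain ⟨v, hv, v_ne0⟩ := (chainTop A X).exists_ne_zero
    have prim : isSl2.HasPrimitiveVectorWith v (chainLength A X : ℂ) :=
      have := lie_mem_genWeightSpace_of_mem_genWeightSpace he hv
      ⟨v_ne0, (chainLength_smul _ _ hv).symm,
        by rwa [genWeightSpace_add_chainTop _ _ hA] at this⟩
    have hw0 := prim.pow_toEnd_f_ne_zero_of_eq_nat rfl (i := n + 1) (by lia)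
    have hw0' := prim.pow_toEnd_f_ne_zero_of_eq_nat rfl (i := n) (by lia)
    have hw : ((toEnd ℂ L L f) ^ (n + 1)) v ∈ rootSpace H X := by
      have := toEnd_pow_apply_mem hf hv (n + 1)
      rw [coe_chainTop', hn, ← add_assoc, smul_neg, Nat.succ_eq_add_one, neg_add_cancel,
        zero_add] at this
      exact this
    obtain ⟨c, hcx⟩ : ∃ c : ℂ, c • x = ((toEnd ℂ L L f) ^ (n + 1)) v := by
      simpa using (finrank_eq_one_iff_of_nonzero' (⟨x, hx⟩ : rootSpace H X) (by simpa using hx0)).mp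
        (finrank_rootSpace_eq_one _ hX) ⟨_, hw⟩
    have h2 := prim.lie_e_pow_succ_toEnd_f n
    rw [← hcx, lie_smul, hex, smul_zero] at h2
    have h3 := (smul_eq_zero_iff_left hw0').1 h2.symm
    have h4 : chainLength A X = 2 * n + 2 := by lia
    rw [h4] at h3
    have h5 : (((n + 1) * (n + 2) : ℕ) : ℂ) = 0 := by
      rw [← h3]; push_cast; ring
    have := Nat.cast_eq_zero.1 h5
    simp at this
  exact ⟨h0, hk, by lia⟩

lemma rootSpace_neg_eq_bot {χ : H → ℂ} (h : rootSpace H χ = ⊥) : rootSpace H (-χ) = ⊥ := by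
  by_contra h'
  have := (-(⟨-χ, h'⟩ : Weight ℂ H L)).genWeightSpace_ne_bot
  rw [Weight.coe_neg] at this
  apply this
  change rootSpace H (- -χ) = ⊥
  rwa [neg_neg]

lemma mem_centralizer_iff (a : H → ℂ) (x : L) :
    (∀ y ∈ LieSubalgebra.lieSpan ℂ L ((rootSpace H a : Set L) ∪ (rootSpace H (-a) : Set L)),
      ⁅x, y⁆ = 0) ↔ x ∈ centH H a := by
  constructor
  · intro h
    exact ⟨fun y hy => h y (LieSubalgebra.subset_lieSpan (Or.inl hy)),
      fun y hy => h y (LieSubalgebra.subset_lieSpan (Or.inr hy))⟩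
  · intro h y hy
    induction hy using LieSubalgebra.lieSpan_induction with
    | mem y hy => exact hy.elim (h.1 y) (h.2 y)
    | zero => simp
    | add u v _ _ hu hv => rw [lie_add, hu, hv, add_zero]
    | smul t u _ hu => rw [lie_smul, hu, smul_zero]
    | lie u v _ _ hu hv => rw [leibniz_lie, hu, hv, zero_lie, lie_zero, add_zero]

end Helpers

/-- In a semisimple complex Lie algebra `L` with Cartan subalgebra `H`, the
centralizer of the `𝔰𝔩₂`-subalgebra spanned by `H_α`, `L_α` and `L_{−α}`
(the Lie subalgebra generated by the root spaces `L_α` and `L_{−α}`) is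
`{u ∈ H : α(u) = 0} ⊕ (⊕_{β strongly orthogonal to α} L_β)`. -/
theorem centralizer_sl2_eq
    (L : Type*) [LieRing L] [LieAlgebra ℂ L] [FiniteDimensional ℂ L]
    [LieAlgebra.IsSemisimple ℂ L]
    (H : LieSubalgebra ℂ L) [H.IsCartanSubalgebra]
    (α : H →ₗ[ℂ] ℂ) (hα0 : α ≠ 0) (hαroot : rootSpace H ⇑α ≠ ⊥) :
    {x : L | ∀ y ∈ LieSubalgebra.lieSpan ℂ L
        ((rootSpace H ⇑α : Set L) ∪ (rootSpace H ⇑(-α) : Set L)), ⁅x, y⁆ = 0} =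
      (Submodule.map H.toSubmodule.subtype (LinearMap.ker α) ⊔
        ⨆ β : {β : H →ₗ[ℂ] ℂ //
          β ≠ 0 ∧ rootSpace H ⇑β ≠ ⊥ ∧
          -- `β` is strongly orthogonal to `α`:
          α + β ≠ 0 ∧ rootSpace H ⇑(α + β) = ⊥ ∧
          α - β ≠ 0 ∧ rootSpace H ⇑(α - β) = ⊥},
          (rootSpace H ⇑(β : H →ₗ[ℂ] ℂ)).toSubmodule : Submodule ℂ L) := by
  let A : LieModule.Weight ℂ H L := ⟨α, hαroot⟩
  have hAc : (A : H → ℂ) = α := rfl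
  have hA : A.IsNonZero := fun h => hα0 (by ext u; exact congrFun h u)
  have hneg : (⇑(-α) : H → ℂ) = -⇑α := rfl
  ext x
  rw [Set.mem_ofPred_eq, hneg, mem_centralizer_iff, SetLike.mem_coe]
  constructor
  · intro hx
    rw [LieModule.eq_iSup_inf_genWeightSpace ℂ H L (centH H α), ← LieSubmodule.mem_toSubmodule,
      LieSubmodule.iSup_toSubmodule] at hx
    refine SetLike.le_def.1 (iSup_le fun X => ?_) hx
    rintro z ⟨hz1, hz2⟩
    replace hz2 : z ∈ rootSpace H X := hz2
    replace hz1 : z ∈ centH H A := hz1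
    by_cases hz0 : z = 0
    · rw [hz0]; exact Submodule.zero_mem _
    by_cases hX : X.IsZero
    · apply Submodule.mem_sup_left
      rw [hX.eq, rootSpace_zero_eq] at hz2
      have hzH : z ∈ H := hz2
      refine ⟨⟨z, hzH⟩, ?_, rfl⟩
      obtain ⟨e, he, he0⟩ := A.exists_ne_zero
      have h1 := LieAlgebra.IsKilling.lie_eq_smul_of_mem_rootSpace he ⟨z, hzH⟩
      rw [LieSubalgebra.coe_bracket_of_module] at h1
      have h2 : ⁅z, e⁆ = 0 := hz1.1 e he
      exact (smul_eq_zero_iff_left he0).1 (h1.symm.trans h2)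
    · obtain ⟨h0, ht, hb⟩ := chain_trivial A X hA hX hz2 hz0 hz1
      have h2 := LieAlgebra.IsKilling.root_apply_coroot hA
      apply Submodule.mem_sup_right
      have hp : rootSpace H (⇑α + ⇑X) = ⊥ := by
        by_contra hh
        have := (LieAlgebra.IsKilling.rootSpace_zsmul_add_ne_bot_iff A X hA 1).1 (by rwa [one_smul, hAc])
        lia
      have hm : rootSpace H (-⇑α + ⇑X) = ⊥ := by
        by_contra hh
        have := (LieAlgebra.IsKilling.rootSpace_zsmul_add_ne_bot_iff A X hA (-1)).1 (by rwa [neg_smul, one_smul, hAc])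
        lia
      refine (le_iSup_of_le (f := fun β : {β : H →ₗ[ℂ] ℂ //
          β ≠ 0 ∧ rootSpace H ⇑β ≠ ⊥ ∧
          α + β ≠ 0 ∧ rootSpace H ⇑(α + β) = ⊥ ∧
          α - β ≠ 0 ∧ rootSpace H ⇑(α - β) = ⊥} => (rootSpace H ⇑β.1).toSubmodule)
        ⟨X.toLinear, ?_, X.genWeightSpace_ne_bot, ?_, hp, ?_, ?_⟩ le_rfl : _ ≤ _) hz2
      · intro h
        exact hX (by ext u; exact LinearMap.congr_fun h u)
      · intro h
        have h3 : A (LieAlgebra.IsKilling.coroot A) + X (LieAlgebra.IsKilling.coroot A) = 0 := LinearMap.congr_fun h (LieAlgebra.IsKilling.coroot A)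
        rw [h0, h2] at h3
        norm_num at h3
      · intro h
        have h3 : A (LieAlgebra.IsKilling.coroot A) - X (LieAlgebra.IsKilling.coroot A) = 0 := LinearMap.congr_fun h (LieAlgebra.IsKilling.coroot A)
        rw [h0, h2] at h3
        norm_num at h3
      · have := rootSpace_neg_eq_bot hm
        rw [neg_add, neg_neg, ← sub_eq_add_neg] at this
        exact this
  · intro hx
    rw [← LieSubmodule.mem_toSubmodule]
    refine (sup_le ?_ (iSup_le ?_) : _ ≤ (centH H α).toSubmodule) hx
    · rintro _ ⟨u, hu, rfl⟩
      have hu0 : α u = 0 := hu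
      constructor
      · intro y hy
        have h1 := LieAlgebra.IsKilling.lie_eq_smul_of_mem_rootSpace hy u
        rw [hu0, zero_smul] at h1
        exact h1
      · intro y hy
        have h1 := LieAlgebra.IsKilling.lie_eq_smul_of_mem_rootSpace hy u
        rw [Pi.neg_apply, hu0, neg_zero, zero_smul] at h1
        exact h1
    · rintro ⟨β, _, _, _, hp, _, hm⟩ z hz
      replace hz : z ∈ rootSpace H β := hz
      replace hp : rootSpace H (⇑α + ⇑β) = ⊥ := hp
      replace hm : rootSpace H (⇑α - ⇑β) = ⊥ := hm
      constructor
      · intro y hy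
        have h1 : ⁅z, y⁆ ∈ rootSpace H (⇑β + ⇑α) :=
          lie_mem_genWeightSpace_of_mem_genWeightSpace hz hy
        rw [add_comm, hp] at h1
        exact (LieSubmodule.mem_bot _).1 h1
      · intro y hy
        have h1 : ⁅z, y⁆ ∈ rootSpace H (⇑β + -⇑α) :=
          lie_mem_genWeightSpace_of_mem_genWeightSpace hz hy
        have h2 := rootSpace_neg_eq_bot hm
        rw [neg_sub, sub_eq_add_neg] at h2
        rw [h2] at h1
        exact (LieSubmodule.mem_bot _).1 h1
end
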